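/- arXiv:1104.1771 — 5 statements merged into one kernel-verified Lean document; each statement's English description precedes it below -/
import Mathlib

section
/- For every γ > 0 and constants c₀, c₁′ > 0 and c₂′ > 8(γ+3/4)², there exists a constant C > 0 depending only on γ, c₀, c₁′, c₂′ such that the following holds. For all n, m ≥ 1 and σ > 0, if the priors satisfy Assumption (P) and the prior conditions, J₀ᶜ ⊆ {1,…,m} is nonempty with |J₀ᶜ| = m₀, and η_{jn} ∈ [1/n, 1] for each j ∈ J₀ᶜ, then for any sparse group MAP estimator, sup over all means with μ_j = 0 for j ∉ J₀ᶜ and μ_j ∈ l₀[η_{jn}] for j ∈ J₀ᶜ of ∑_{j=1}^m E‖μ̂_j − μ_j‖₂² ≤ C · max( ∑_{j ∈ J₀ᶜ} σ² n η_{jn} ln(e/η_{jn}), σ² m₀ ln(m/m₀) ). -/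
/-! The proof is a model-selection argument. A *model* `M` prescribes a support `M j ⊆ {1,…,n}`
for every group, and the criterion is least squares plus a penalty `penM M` that depends only on
the model. The penalty is `2σ²(1 + 1/γ)` times the negative logarithm of the prior weight `wM M`,
plus a term proportional to the dimension of `M`, and the weights of all models sum to at most `1`
(`sum_wM_le_one`).

Write `z = y - μ`. Comparing the minimizer `μ̂` with means of support exactly `M ⊇ supp μ` that tend
to `μ` gives, for `0 < a < 1` (`basic_ineq`),
`(1 - a)‖μ̂ - μ‖² ≤ penM M + (1/a)‖z on supp μ‖² + ((1/a)‖z on supp μ̂‖² - penM (supp μ̂))`.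
The last bracket is at most `(1/s) ∑_N exp (s((1/a)‖z on N‖² - penM N))`, the sum being over all
models. The exponential moment of the noise on a model of dimension `D` is `(1 - u)^(-D/2)`, where
`u = 2sσ²/a` (`noise_exp_integral`). Assumption (P) leaves enough room in the penalty to choose
`u` and `a` so that the expectation of each summand is at most `wM N` (`exp_penM_le`). Hence the
expected sum is at most `1`, which yields the oracle inequality `risk_le` with a remainder of order
`σ²`.

It remains to choose the comparison model `M` (`exists_model`). The prior conditions bound the
penalties only at sizes up to a fixed fraction of `n` (or `m`) and at the full size. Supports of
intermediate size are therefore enlarged to the full index set, at the cost of a constant factor;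
likewise all `m` groups are made active when `|J₀ᶜ| > m / e`. Active groups are given nonempty
supports, because no bound on `π₀(0)` is available. -/

open MeasureTheory ProbabilityTheory Finset
open scoped ENNReal NNReal

noncomputable section

/-- Product Gaussian data distribution on `ℝ^{n×m}`: independent `N(μ j i, σ²)`. -/
def gaussianData (n m : ℕ) (σ : ℝ) (μ : Fin m → Fin n → ℝ) :
    Measure (Fin m → Fin n → ℝ) :=
  Measure.pi fun j => Measure.pi fun i => gaussianReal (μ j i) ((σ ^ 2).toNNReal)

/-- Number of nonzero components of a vector. -/
def l0norm {n : ℕ} (v : Fin n → ℝ) : ℕ :=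
  (Finset.univ.filter fun i => v i ≠ 0).card

/-- Within-vector complexity penalty `Pen_j`. -/
def PenJ (n : ℕ) (σ γ : ℝ) (π : ℕ → ℝ) (h : ℕ) : ℝ :=
  if h = 0 then 0
  else 2 * σ ^ 2 * (1 + 1 / γ) *
    Real.log ((π h)⁻¹ * (n.choose h : ℝ) * (1 + γ) ^ ((h : ℝ) / 2))

/-- Between-vector complexity penalty `Pen₀`. -/
def Pen0 (m : ℕ) (σ γ : ℝ) (π0 : ℕ → ℝ) (k : ℕ) : ℝ :=
  2 * σ ^ 2 * (1 + 1 / γ) * Real.log ((π0 k)⁻¹ * (m.choose k : ℝ))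

/-- The sparse group MAP criterion. -/
def mapCrit (n m : ℕ) (σ γ : ℝ) (π0 : ℕ → ℝ) (πj : Fin m → ℕ → ℝ)
    (y μt : Fin m → Fin n → ℝ) : ℝ :=
  (∑ j, ((∑ i, (y j i - μt j i) ^ 2) + PenJ n σ γ (πj j) (l0norm (μt j))))
    + Pen0 m σ γ π0 ((Finset.univ.filter fun j => μt j ≠ 0).card)

/-- A sparse group MAP estimator: a measurable selection of minimizers of the criterion. -/
def IsSparseGroupMAP (n m : ℕ) (σ γ : ℝ) (π0 : ℕ → ℝ) (πj : Fin m → ℕ → ℝ)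
    (est : (Fin m → Fin n → ℝ) → Fin m → Fin n → ℝ) : Prop :=
  Measurable est ∧
    ∀ y μt, mapCrit n m σ γ π0 πj y (est y) ≤ mapCrit n m σ γ π0 πj y μt

/-- The quadratic risk `∑_j E‖μ̂_j − μ_j‖₂²`. -/
def groupRisk (n m : ℕ) (σ : ℝ) (μ : Fin m → Fin n → ℝ)
    (est : (Fin m → Fin n → ℝ) → Fin m → Fin n → ℝ) : ℝ≥0∞ :=
  ∫⁻ y, ENNReal.ofReal (∑ j, ∑ i, (est y j i - μ j i) ^ 2) ∂(gaussianData n m σ μ)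

/-- Decreasing rearrangement of the absolute values of the components of `v`:
`ordAbs v 0 ≥ ordAbs v 1 ≥ …` (0-indexed; paper index `(i)` corresponds to `i-1`). -/
def ordAbs {n : ℕ} (v : Fin n → ℝ) : Fin n → ℝ :=
  fun i => |v (Tuple.sort (fun j => -|v j|) i)|

/-- The set of indices of the nonzero components of `v`. -/
def supp {n : ℕ} (v : Fin n → ℝ) : Finset (Fin n) :=
  Finset.univ.filter fun i => v i ≠ 0

/-- The total complexity penalty of the model `M`, where a model prescribes for each group `j`
the (possibly empty) support `M j` of the mean vector. -/
def penM (n m : ℕ) (σ γ : ℝ) (π0 : ℕ → ℝ) (πj : Fin m → ℕ → ℝ)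
    (M : Fin m → Finset (Fin n)) : ℝ :=
  (∑ j, PenJ n σ γ (πj j) (M j).card)
    + Pen0 m σ γ π0 ((Finset.univ.filter fun j => M j ≠ ∅).card)

/-- The prior weight of the support `S` inside group `j`, given that the group is active; the
inactive support `∅` gets weight `1`. -/
def wJ (n : ℕ) (π : ℕ → ℝ) (S : Finset (Fin n)) : ℝ :=
  if S = ∅ then 1 else π S.card / (n.choose S.card : ℝ)

/-- The squared norm of the noise `y - μ` restricted to the coordinates of the model `M`. -/
def noiseSq {n m : ℕ} (μ y : Fin m → Fin n → ℝ) (M : Fin m → Finset (Fin n)) : ℝ :=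
  ∑ j, ∑ i ∈ M j, (y j i - μ j i) ^ 2

lemma supp_eq_empty {n : ℕ} (v : Fin n → ℝ) : supp v = ∅ ↔ v = 0 := by
  simp [supp, Finset.filter_eq_empty_iff, funext_iff]

lemma mapCrit_eq (n m : ℕ) (σ γ : ℝ) (π0 : ℕ → ℝ) (πj : Fin m → ℕ → ℝ)
    (y v : Fin m → Fin n → ℝ) :
    mapCrit n m σ γ π0 πj y v
      = (∑ j, ∑ i, (y j i - v j i) ^ 2) + penM n m σ γ π0 πj (fun j => supp (v j)) := by
  unfold mapCrit penM
  rw [Finset.sum_add_distrib, add_assoc]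
  simp only [ne_eq, supp_eq_empty]
  rfl

/-! ### Exponential moments of the noise -/

lemma gauss_integral (a σ u : ℝ) (hσ : 0 < σ) (hu1 : u < 1) :
    ∫ x, Real.exp (u / (2 * σ ^ 2) * (x - a) ^ 2) ∂(gaussianReal a ((σ ^ 2).toNNReal))
      = (√(1 - u))⁻¹ := by
  have hs : 0 < σ ^ 2 := by positivity
  have hv : (σ ^ 2).toNNReal ≠ 0 := by simpa using hσ.ne'
  have h1 : 0 < 1 - u := by linarith
  rw [integral_gaussianReal_eq_integral_smul hv]
  have : ∀ x, gaussianPDFReal a ((σ ^ 2).toNNReal) x • Real.exp (u / (2 * σ ^ 2) * (x - a) ^ 2)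
      = (√(2 * Real.pi * σ ^ 2))⁻¹ * Real.exp (-((1 - u) / (2 * σ ^ 2)) * (x - a) ^ 2) := by
    intro x
    rw [gaussianPDFReal, Real.coe_toNNReal _ hs.le, smul_eq_mul, mul_assoc, ← Real.exp_add]
    congr 2
    ring
  simp_rw [this]
  rw [integral_const_mul,
    integral_sub_right_eq_self (fun x => Real.exp (-((1 - u) / (2 * σ ^ 2)) * x ^ 2)) a,
    integral_gaussian, ← Real.sqrt_inv, ← Real.sqrt_mul (by positivity), ← Real.sqrt_inv]
  congr 1
  have := Real.pi_ne_zero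
  field_simp

/-- The noise restricted to a model of dimension `D` is `σ²` times a chi-square variable with
`D` degrees of freedom, so its exponential moment is `(1 - u)^(-D/2)`. -/
lemma noise_exp_integral (n m : ℕ) (σ u : ℝ) (hσ : 0 < σ) (hu1 : u < 1)
    (μ : Fin m → Fin n → ℝ) (M : Fin m → Finset (Fin n)) :
    ∫ y, Real.exp (u / (2 * σ ^ 2) * noiseSq μ y M) ∂(gaussianData n m σ μ)
      = ∏ j, ((√(1 - u))⁻¹) ^ (M j).card := by
  have h : ∀ y : Fin m → Fin n → ℝ, Real.exp (u / (2 * σ ^ 2) * noiseSq μ y M)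
      = ∏ j, ∏ i, (if i ∈ M j then Real.exp (u / (2 * σ ^ 2) * (y j i - μ j i) ^ 2) else 1) := by
    intro y
    rw [noiseSq, Finset.mul_sum, Real.exp_sum]
    refine Finset.prod_congr rfl fun j _ => ?_
    rw [Finset.mul_sum, Real.exp_sum, Finset.prod_ite_mem, Finset.univ_inter]
  simp_rw [h]
  unfold gaussianData
  rw [integral_fintype_prod_eq_prod (fun j (x : Fin n → ℝ) =>
    ∏ i, (if i ∈ M j then Real.exp (u / (2 * σ ^ 2) * (x i - μ j i) ^ 2) else 1))]
  refine Finset.prod_congr rfl fun j _ => ?_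
  rw [integral_fintype_prod_eq_prod (fun i (x : ℝ) =>
    if i ∈ M j then Real.exp (u / (2 * σ ^ 2) * (x - μ j i) ^ 2) else 1)]
  rw [← Finset.prod_const, ← Finset.univ_inter (M j), ← Finset.prod_ite_mem]
  refine Finset.prod_congr rfl fun i _ => ?_
  by_cases hi : i ∈ M j
  · simp [hi, gauss_integral _ σ u hσ hu1]
  · simp [hi]

lemma noise_exp_integrable (n m : ℕ) (σ u : ℝ) (hσ : 0 < σ) (hu1 : u < 1)
    (μ : Fin m → Fin n → ℝ) (M : Fin m → Finset (Fin n)) :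
    Integrable (fun y => Real.exp (u / (2 * σ ^ 2) * noiseSq μ y M)) (gaussianData n m σ μ) := by
  -- a function whose Bochner integral is nonzero is integrable
  by_contra hcon
  have h := noise_exp_integral n m σ u hσ hu1 μ M
  rw [integral_undef hcon] at h
  have : 0 < ∏ j, ((√(1 - u))⁻¹) ^ (M j).card := by
    have : 0 < √(1 - u) := Real.sqrt_pos.2 (by linarith)
    positivity
  linarith

/-! ### The deterministic inequality -/

/-- The minimizing property of `e`, tested against the true mean `μ` with the penalty of any
model `M ⊇ supp μ`. The value is the limit of the criterion along means with support exactly `M`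
that converge to `μ`. -/
lemma crit_le (n m : ℕ) (σ γ : ℝ) (π0 : ℕ → ℝ) (πj : Fin m → ℕ → ℝ)
    (y e μ : Fin m → Fin n → ℝ)
    (he : ∀ v, mapCrit n m σ γ π0 πj y e ≤ mapCrit n m σ γ π0 πj y v)
    (M : Fin m → Finset (Fin n)) (hM : ∀ j, supp (μ j) ⊆ M j) :
    mapCrit n m σ γ π0 πj y e
      ≤ (∑ j, ∑ i, (y j i - μ j i) ^ 2) + penM n m σ γ π0 πj M := by
  let v : ℝ → Fin m → Fin n → ℝ := fun ε j i =>
    if i ∈ supp (μ j) then μ j i else if i ∈ M j then ε else 0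
  have hμ0 : ∀ j i, i ∉ supp (μ j) → μ j i = 0 := by
    intro j i h; simpa [supp] using h
  have hv0 : v 0 = μ := by
    funext j i
    by_cases h : i ∈ supp (μ j)
    · simp [v, h]
    · simp [v, h, hμ0 j i h]
  have hsupp : ∀ ε, ε ≠ 0 → ∀ j, supp (v ε j) = M j := by
    intro ε hε j
    ext i
    by_cases h : i ∈ supp (μ j)
    · have h2 := hM j h
      have h3 : μ j i ≠ 0 := by simpa [supp] using h
      simp only [h2, iff_true]
      simp [supp, v, h3]
    · rw [supp, Finset.mem_filter]
      by_cases h2 : i ∈ M j <;> simp [v, h, h2, hε]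
  have hcont : Continuous fun ε : ℝ =>
      (∑ j, ∑ i, (y j i - v ε j i) ^ 2) + penM n m σ γ π0 πj M := by
    refine Continuous.add (continuous_finsetSum _ fun j _ => continuous_finsetSum _ fun i _ =>
      (continuous_const.sub ?_).pow 2) continuous_const
    simp only [v]
    split_ifs <;> fun_prop
  have ht := (hcont.tendsto 0).mono_left (nhdsWithin_le_nhds (s := {0}ᶜ))
  rw [hv0] at ht
  refine ge_of_tendsto ht ?_
  filter_upwards [self_mem_nhdsWithin] with ε hε
  have := he (v ε)
  rw [mapCrit_eq n m σ γ π0 πj y (v ε)] at this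
  simpa only [hsupp ε hε] using this

/-- The basic inequality: up to the penalty of the comparison model, the loss is controlled by
the noise on the true support and the penalized noise on the selected support. -/
lemma basic_ineq (n m : ℕ) (σ γ a : ℝ) (ha : 0 < a) (π0 : ℕ → ℝ) (πj : Fin m → ℕ → ℝ)
    (y e μ : Fin m → Fin n → ℝ)
    (he : ∀ v, mapCrit n m σ γ π0 πj y e ≤ mapCrit n m σ γ π0 πj y v)
    (M : Fin m → Finset (Fin n)) (hM : ∀ j, supp (μ j) ⊆ M j) :
    (1 - a) * (∑ j, ∑ i, (e j i - μ j i) ^ 2)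
      ≤ penM n m σ γ π0 πj M + 1 / a * noiseSq μ y (fun j => supp (μ j))
        + (1 / a * noiseSq μ y (fun j => supp (e j))
          - penM n m σ γ π0 πj (fun j => supp (e j))) := by
  have h1 := crit_le n m σ γ π0 πj y e μ he M hM
  rw [mapCrit_eq] at h1
  have h2 : (1 - a) * (∑ j, ∑ i, (e j i - μ j i) ^ 2) + (∑ j, ∑ i, (y j i - μ j i) ^ 2)
      ≤ (∑ j, ∑ i, (y j i - e j i) ^ 2) + 1 / a * noiseSq μ y (fun j => supp (μ j))
        + 1 / a * noiseSq μ y (fun j => supp (e j)) := by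
    have hn : ∀ w : Fin m → Fin n → ℝ, noiseSq μ y (fun j => supp (w j))
        = ∑ j, ∑ i, (if w j i ≠ 0 then (y j i - μ j i) ^ 2 else 0) := by
      intro w
      simp only [noiseSq, supp, Finset.sum_filter]
    rw [hn, hn]
    simp only [Finset.mul_sum, ← Finset.sum_add_distrib]
    refine Finset.sum_le_sum fun j _ => Finset.sum_le_sum fun i _ => ?_
    -- `2 z d ≤ a d² + z²/a` with `z = y - μ`, `d = e - μ`, and `d = 0` off both supports
    have key : (1 - a) * (e j i - μ j i) ^ 2 + (y j i - μ j i) ^ 2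
        ≤ (y j i - e j i) ^ 2 + 1 / a * (y j i - μ j i) ^ 2 := by
      have : 0 ≤ 1 / a * (a * (e j i - μ j i) - (y j i - μ j i)) ^ 2 := by positivity
      have h3 : 1 / a * (a * (e j i - μ j i) - (y j i - μ j i)) ^ 2
          = a * (e j i - μ j i) ^ 2 - 2 * (e j i - μ j i) * (y j i - μ j i)
            + 1 / a * (y j i - μ j i) ^ 2 := by
        field_simp
        ring
      nlinarith
    have hz : 0 ≤ 1 / a * (y j i - μ j i) ^ 2 := by positivity
    by_cases hμ : μ j i = 0 <;> by_cases hE : e j i = 0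
    · simp [hμ, hE]
    · rw [if_neg (not_not.2 hμ), if_pos hE]; linarith
    · rw [if_pos hμ, if_neg (not_not.2 hE)]; linarith
    · rw [if_pos hμ, if_pos hE]; linarith
  linarith

/-! ### The model weights -/

/-- The prior weight of the model `M`. -/
def wM (n m : ℕ) (π0 : ℕ → ℝ) (πj : Fin m → ℕ → ℝ) (M : Fin m → Finset (Fin n)) : ℝ :=
  π0 ((Finset.univ.filter fun j => M j ≠ ∅).card)
      / (m.choose ((Finset.univ.filter fun j => M j ≠ ∅).card) : ℝ)
    * ∏ j, wJ n (πj j) (M j)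

lemma sum_powerset_div_choose (n : ℕ) (p : ℕ → ℝ) :
    ∑ S : Finset (Fin n), p S.card / (n.choose S.card : ℝ) = ∑ h ∈ Finset.range (n + 1), p h := by
  have := Finset.sum_powerset_apply_card (fun h => p h / (n.choose h : ℝ))
    (x := (Finset.univ : Finset (Fin n)))
  rw [Finset.powerset_univ, Finset.card_univ, Fintype.card_fin] at this
  rw [this]
  refine Finset.sum_congr rfl fun h hh => ?_
  have h0 : (n.choose h : ℝ) ≠ 0 := by
    have := Nat.choose_pos (Nat.lt_succ_iff.1 (Finset.mem_range.1 hh))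
    positivity
  rw [nsmul_eq_mul]
  field_simp

/-- The weights of all models sum to at most `1`: they form a prior, drawn by choosing the number
of active groups, the active groups, and then the size and location of each support. -/
lemma sum_wM_le_one (n m : ℕ) (π0 : ℕ → ℝ) (πj : Fin m → ℕ → ℝ)
    (h0 : ∀ k, k ≤ m → 0 < π0 k) (h0s : ∑ k ∈ Finset.range (m + 1), π0 k = 1)
    (hj : ∀ j h, 1 ≤ h → h ≤ n → 0 < πj j h)
    (hjs : ∀ j, ∑ h ∈ Finset.Icc 1 n, πj j h = 1) :
    ∑ M, wM n m π0 πj M ≤ 1 := by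
  let g : Finset (Fin m) → Fin m → Finset (Fin n) → ℝ := fun J j S =>
    if j ∈ J then (if S = ∅ then 0 else πj j S.card / (n.choose S.card : ℝ))
    else (if S = ∅ then 1 else 0)
  have hcard : ∀ J : Finset (Fin m), J.card ≤ m := fun J => by
    simpa using Finset.card_le_univ J
  have hpos : ∀ J : Finset (Fin m), 0 ≤ π0 J.card / (m.choose J.card : ℝ) := fun J =>
    div_nonneg (h0 _ (hcard J)).le (Nat.cast_nonneg _)
  have hg0 : ∀ J j S, 0 ≤ g J j S := by
    intro J j S
    simp only [g]
    split_ifs with h1 h2 h3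
    · exact le_rfl
    · refine div_nonneg (hj j _ ?_ ?_).le (Nat.cast_nonneg _)
      · exact Finset.card_pos.2 (Finset.nonempty_iff_ne_empty.2 h2)
      · simpa using Finset.card_le_univ S
    · exact zero_le_one
    · exact le_rfl
  have hle : ∀ M : Fin m → Finset (Fin n), wM n m π0 πj M
      ≤ ∑ J : Finset (Fin m), π0 J.card / (m.choose J.card : ℝ) * ∏ j, g J j (M j) := by
    intro M
    have hw : wM n m π0 πj M = π0 ((Finset.univ.filter fun j => M j ≠ ∅).card)
        / (m.choose ((Finset.univ.filter fun j => M j ≠ ∅).card) : ℝ)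
        * ∏ j, g (Finset.univ.filter fun j => M j ≠ ∅) j (M j) := by
      unfold wM
      congr 1
      refine Finset.prod_congr rfl fun j _ => ?_
      by_cases h : M j = ∅ <;> simp [g, wJ, h]
    rw [hw]
    exact Finset.single_le_sum
      (f := fun J : Finset (Fin m) => π0 J.card / (m.choose J.card : ℝ) * ∏ j, g J j (M j))
      (fun J _ => mul_nonneg (hpos J) (Finset.prod_nonneg fun j _ => hg0 J j _))
      (Finset.mem_univ _)
  have hsum : ∀ J j, ∑ S, g J j S = 1 := by
    intro J j
    by_cases hJ : j ∈ J
    · have e : ∀ S : Finset (Fin n), g J j S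
          = (if S.card = 0 then 0 else πj j S.card) / (n.choose S.card : ℝ) := by
        intro S
        by_cases hS : S = ∅ <;> simp [g, hJ, hS]
      simp_rw [e]
      rw [sum_powerset_div_choose n (fun h => if h = 0 then 0 else πj j h),
        Finset.sum_range_succ', if_pos rfl, add_zero, ← hjs j,
        ← Finset.Ico_succ_right_eq_Icc, Finset.sum_Ico_eq_sum_range]
      simp [add_comm 1]
    · simp [g, hJ]
  calc ∑ M, wM n m π0 πj M
      ≤ ∑ M : Fin m → Finset (Fin n), ∑ J : Finset (Fin m),
          π0 J.card / (m.choose J.card : ℝ) * ∏ j, g J j (M j) :=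
        Finset.sum_le_sum fun M _ => hle M
    _ = ∑ J : Finset (Fin m), π0 J.card / (m.choose J.card : ℝ) * ∏ j, ∑ S, g J j S := by
        rw [Finset.sum_comm]
        refine Finset.sum_congr rfl fun J _ => ?_
        rw [← Finset.mul_sum, Finset.prod_univ_sum, Fintype.piFinset_univ]
    _ = 1 := by
        simp_rw [hsum]
        simp only [Finset.prod_const_one, mul_one]
        rw [sum_powerset_div_choose, h0s]
    _ ≤ 1 := le_rfl

/-- Assumption (P) makes the penalty of one group exceed the threshold needed to absorb the
exponential moment `κ ^ h` of the noise, leaving the prior weight. -/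
lemma exp_penJ_le (n : ℕ) (σ γ s κ : ℝ) (hγ : 0 < γ) (hκ : 0 < κ) (hκ2 : κ ^ 2 = 2 * (1 + γ))
    (hs : s * (2 * σ ^ 2 * (1 + 1 / γ)) = 1 + 1 / (4 * γ)) (π : ℕ → ℝ)
    (hpos : ∀ h, 1 ≤ h → h ≤ n → 0 < π h)
    (hP : ∀ h, 1 ≤ h → h ≤ n →
      π h ≤ (n.choose h : ℝ) * Real.exp (-(8 * (γ + 3 / 4) ^ 2) * h))
    (S : Finset (Fin n)) :
    Real.exp (-(s * PenJ n σ γ π S.card)) * κ ^ S.card ≤ wJ n π S := by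
  by_cases hS : S = ∅
  · simp [hS, wJ, PenJ]
  have h1 : 1 ≤ S.card := Finset.card_pos.2 (Finset.nonempty_iff_ne_empty.2 hS)
  have hn : S.card ≤ n := by simpa using Finset.card_le_univ S
  generalize hh : S.card = h at h1 hn
  have hC : (0 : ℝ) < n.choose h := by exact_mod_cast Nat.choose_pos hn
  have hp := hpos h h1 hn
  rw [wJ, if_neg hS, hh, PenJ, if_neg (by omega), Real.log_mul (by positivity) (by positivity),
    Real.log_rpow (by positivity), ← mul_assoc, hs]
  set A := Real.log ((π h)⁻¹ * (n.choose h : ℝ)) with hA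
  have hw : π h / (n.choose h : ℝ) = Real.exp (-A) := by
    rw [Real.exp_neg, hA, Real.exp_log (by positivity)]
    field_simp
  have hAc : 8 * (γ + 3 / 4) ^ 2 * h ≤ A := by
    rw [hA, Real.le_log_iff_exp_le (by positivity), inv_mul_eq_div, le_div_iff₀ hp]
    calc Real.exp (8 * (γ + 3 / 4) ^ 2 * h) * π h
        ≤ Real.exp (8 * (γ + 3 / 4) ^ 2 * h)
          * ((n.choose h : ℝ) * Real.exp (-(8 * (γ + 3 / 4) ^ 2) * h)) := by
          gcongr; exact hP h h1 hn
      _ = (n.choose h : ℝ) := by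
          rw [mul_left_comm, ← Real.exp_add]; simp
  have hκl : Real.log κ = (Real.log 2 + Real.log (1 + γ)) / 2 := by
    have := congrArg Real.log hκ2
    rw [Real.log_pow, Real.log_mul (by norm_num) (by positivity)] at this
    push_cast at this
    linarith
  have hκh : κ ^ h = Real.exp (h * Real.log κ) := by
    rw [← Real.log_pow, Real.exp_log (by positivity)]
  rw [hw, hκh, ← Real.exp_add, Real.exp_le_exp, hκl]
  have hl : 0 ≤ Real.log (1 + γ) := Real.log_nonneg (by linarith)
  have hl2 : Real.log 2 ≤ 1 := by linarith [Real.log_two_lt_d9]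
  have hh1 : (1 : ℝ) ≤ h := by exact_mod_cast h1
  have hδ : 3 * (h : ℝ) ≤ 1 / (4 * γ) * A := by
    have : 1 / (4 * γ) * (8 * (γ + 3 / 4) ^ 2 * h) ≤ 1 / (4 * γ) * A := by gcongr
    refine le_trans ?_ this
    rw [one_div, inv_mul_eq_div, le_div_iff₀ (by positivity)]
    nlinarith [sq_nonneg γ]
  have h5 : 0 ≤ 1 / (4 * γ) * ((h : ℝ) / 2 * Real.log (1 + γ)) := by positivity
  have h6 : (h : ℝ) * Real.log 2 ≤ h * 1 := by gcongr
  nlinarith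

lemma exp_penM_le (n m : ℕ) (σ γ s κ : ℝ) (hγ : 0 < γ) (hκ : 0 < κ) (hκ2 : κ ^ 2 = 2 * (1 + γ))
    (hs : s * (2 * σ ^ 2 * (1 + 1 / γ)) = 1 + 1 / (4 * γ)) (π0 : ℕ → ℝ) (πj : Fin m → ℕ → ℝ)
    (h0 : ∀ k, k ≤ m → 0 < π0 k) (h0s : ∑ k ∈ Finset.range (m + 1), π0 k = 1)
    (hj : ∀ j h, 1 ≤ h → h ≤ n → 0 < πj j h)
    (hP : ∀ j h, 1 ≤ h → h ≤ n →
      πj j h ≤ (n.choose h : ℝ) * Real.exp (-(8 * (γ + 3 / 4) ^ 2) * h))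
    (M : Fin m → Finset (Fin n)) :
    Real.exp (-(s * penM n m σ γ π0 πj M)) * ∏ j, κ ^ (M j).card ≤ wM n m π0 πj M := by
  unfold penM wM
  generalize hk : (Finset.univ.filter fun j => M j ≠ ∅).card = k
  have hkm : k ≤ m := by
    rw [← hk]; simpa using Finset.card_le_univ (Finset.univ.filter fun j => M j ≠ ∅)
  have hC : (1 : ℝ) ≤ m.choose k := by exact_mod_cast Nat.choose_pos hkm
  have hp := h0 k hkm
  have hp1 : π0 k ≤ 1 := by
    rw [← h0s]
    exact Finset.single_le_sum (fun i hi => (h0 i (Nat.lt_succ_iff.1 (Finset.mem_range.1 hi))).le)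
      (Finset.mem_range.2 (Nat.lt_succ_iff.2 hkm))
  have hA : 0 ≤ Real.log ((π0 k)⁻¹ * (m.choose k : ℝ)) := by
    refine Real.log_nonneg ?_
    rw [inv_mul_eq_div, le_div_iff₀ hp]
    linarith
  have e0 : Real.exp (-(s * Pen0 m σ γ π0 k)) ≤ π0 k / (m.choose k : ℝ) := by
    have hw : π0 k / (m.choose k : ℝ) = Real.exp (-Real.log ((π0 k)⁻¹ * (m.choose k : ℝ))) := by
      rw [Real.exp_neg, Real.exp_log (by positivity)]
      field_simp
    rw [hw, Real.exp_le_exp, Pen0, ← mul_assoc, hs]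
    have : 0 ≤ 1 / (4 * γ) * Real.log ((π0 k)⁻¹ * (m.choose k : ℝ)) := by positivity
    nlinarith
  have e1 : Real.exp (-(s * ((∑ j, PenJ n σ γ (πj j) (M j).card) + Pen0 m σ γ π0 k)))
      * ∏ j, κ ^ (M j).card
      = Real.exp (-(s * Pen0 m σ γ π0 k))
        * ∏ j, (Real.exp (-(s * PenJ n σ γ (πj j) (M j).card)) * κ ^ (M j).card) := by
    rw [Finset.prod_mul_distrib, ← Real.exp_sum, ← mul_assoc, ← Real.exp_add,
      Finset.sum_neg_distrib, ← Finset.mul_sum]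
    congr 2
    ring
  rw [e1]
  exact mul_le_mul e0 (Finset.prod_le_prod (fun j _ => by positivity) fun j _ =>
    exp_penJ_le n σ γ s κ hγ hκ hκ2 hs (πj j) (hj j) (hP j) (M j))
    (Finset.prod_nonneg fun j _ => by positivity) (by positivity)

/-! ### Upper bounds on the penalties -/

lemma log_choose_le (n h : ℕ) (h1 : 1 ≤ h) (hn : h ≤ n) :
    Real.log (n.choose h : ℝ) ≤ h * (1 + Real.log ((n : ℝ) / h)) := by
  have hC : (0 : ℝ) < n.choose h := by exact_mod_cast Nat.choose_pos hn
  have hh : (0 : ℝ) < h := by exact_mod_cast h1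
  have hn0 : (0 : ℝ) < n := lt_of_lt_of_le hh (by exact_mod_cast hn)
  have key : (n.choose h : ℝ) ≤ ((n : ℝ) / h) ^ h * Real.exp h := by
    calc (n.choose h : ℝ) ≤ (n : ℝ) ^ h / h.factorial := Nat.choose_le_pow_div h n
      _ = ((n : ℝ) / h) ^ h * ((h : ℝ) ^ h / h.factorial) := by
          rw [div_pow]; field_simp
      _ ≤ ((n : ℝ) / h) ^ h * Real.exp h := by
          gcongr
          exact Real.pow_div_factorial_le_exp h hh.le h
  calc Real.log (n.choose h : ℝ) ≤ Real.log (((n : ℝ) / h) ^ h * Real.exp h) :=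
        Real.log_le_log hC key
    _ = h * (1 + Real.log ((n : ℝ) / h)) := by
        rw [Real.log_mul (by positivity) (by positivity), Real.log_pow, Real.log_exp]
        ring

/-- `x ↦ x log (e / x)` is increasing on `(0, 1]`. -/
lemma mul_log_mono {x y : ℝ} (hx : 0 < x) (hxy : x ≤ y) (hy : y ≤ 1) :
    x * Real.log (Real.exp 1 / x) ≤ y * Real.log (Real.exp 1 / y) := by
  have hy0 : 0 < y := hx.trans_le hxy
  rw [Real.log_div (by positivity) hx.ne', Real.log_div (by positivity) hy0.ne', Real.log_exp]
  have h1 := Real.log_le_sub_one_of_pos (div_pos hy0 hx)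
  rw [Real.log_div hy0.ne' hx.ne'] at h1
  have h2 : x * (Real.log y - Real.log x) ≤ x * (y / x - 1) := by gcongr
  have h3 : x * (y / x - 1) = y - x := by field_simp
  have h4 : Real.log y ≤ 0 := Real.log_nonpos hy0.le hy
  nlinarith

lemma one_le_log_div {η : ℝ} (h0 : 0 < η) (h1 : η ≤ 1) : 1 ≤ Real.log (Real.exp 1 / η) := by
  rw [Real.log_div (by positivity) h0.ne', Real.log_exp]
  linarith [Real.log_nonpos h0.le h1]

/-- The constant comparing the penalty of one group with the rate `σ² n η log (e / η)`. -/
def K1 (γ c₁ c₂ : ℝ) : ℝ :=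
  2 * (1 + 1 / γ) * ((c₁ + 1 + Real.log (1 + γ))
    + Real.exp (8 * (γ + 3 / 4) ^ 2) * (c₂ + Real.log (1 + γ)))

/-- Every support of size at most `η n` is contained in a nonempty one whose penalty is of order
`σ² n η log (e / η)`. The larger support is the given one (a singleton if that is empty)
when the prior condition at small sizes applies, and the full index set otherwise. -/
lemma exists_superset_pen (n : ℕ) (hn : 1 ≤ n) (σ γ c₁ c₂ : ℝ) (hγ : 0 < γ)
    (hc₁ : 0 < c₁) (hc₂ : 0 < c₂) (π : ℕ → ℝ) (hpos : ∀ h, 1 ≤ h → h ≤ n → 0 < π h)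
    (hπ : ∀ h : ℕ, 1 ≤ h → (h : ℝ) ≤ (n : ℝ) * Real.exp (-(8 * (γ + 3 / 4) ^ 2)) →
      ((h : ℝ) / n) ^ (c₁ * (h : ℝ)) ≤ π h)
    (hπn : Real.exp (-(c₂ * n)) ≤ π n) (η : ℝ) (hη : 1 / (n : ℝ) ≤ η) (hη1 : η ≤ 1)
    (S : Finset (Fin n)) (hS : (S.card : ℝ) ≤ η * n) :
    ∃ T, S ⊆ T ∧ T ≠ ∅ ∧
      PenJ n σ γ π T.card ≤ K1 γ c₁ c₂ * (σ ^ 2 * n * η * Real.log (Real.exp 1 / η)) := by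
  have hn0 : (0 : ℝ) < n := by exact_mod_cast hn
  have hη0 : 0 < η := lt_of_lt_of_le (by positivity) hη
  have hlg : 0 ≤ Real.log (1 + γ) := Real.log_nonneg (by linarith)
  have hone := one_le_log_div hη0 hη1
  set c := 8 * (γ + 3 / 4) ^ 2 with hc
  set φ := n * η * Real.log (Real.exp 1 / η) with hφ
  have hφ0 : 0 ≤ φ := by positivity
  have hK : K1 γ c₁ c₂ * (σ ^ 2 * n * η * Real.log (Real.exp 1 / η))
      = 2 * σ ^ 2 * (1 + 1 / γ) * ((c₁ + 1 + Real.log (1 + γ)) * φ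
        + Real.exp c * (c₂ + Real.log (1 + γ)) * φ) := by
    rw [K1, hφ]; ring
  rw [hK]
  have hp1 : 0 ≤ (c₁ + 1 + Real.log (1 + γ)) * φ := by positivity
  have hp2 : 0 ≤ Real.exp c * (c₂ + Real.log (1 + γ)) * φ := by positivity
  obtain ⟨h, hh1, hhS, hhn, hhη⟩ : ∃ h : ℕ, 1 ≤ h ∧ S.card ≤ h ∧ h ≤ n ∧ (h : ℝ) ≤ η * n := by
    refine ⟨max 1 S.card, le_max_left _ _, le_max_right _ _,
      max_le hn (by simpa using Finset.card_le_univ S), ?_⟩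
    rw [Nat.cast_max]
    refine max_le ?_ hS
    rw [div_le_iff₀ hn0] at hη
    simpa using hη
  have hh0 : (0 : ℝ) < h := by exact_mod_cast hh1
  by_cases hsmall : (h : ℝ) ≤ (n : ℝ) * Real.exp (-c)
  · obtain ⟨T, hST, hT⟩ := Finset.exists_superset_card_eq hhS (by simpa using hhn)
    refine ⟨T, hST, ?_, ?_⟩
    · rintro rfl; simp at hT; omega
    have hC : (0 : ℝ) < n.choose h := by exact_mod_cast Nat.choose_pos hhn
    have hp := hpos h hh1 hhn
    have hlogπ : -Real.log (π h) ≤ c₁ * h * Real.log ((n : ℝ) / h) := by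
      have := Real.log_le_log (by positivity) (hπ h hh1 hsmall)
      rw [Real.log_rpow (by positivity), Real.log_div hh0.ne' hn0.ne'] at this
      rw [Real.log_div hn0.ne' hh0.ne']
      nlinarith
    have hx : (h : ℝ) / n ≤ η := by rw [div_le_iff₀ hn0]; exact hhη
    have hmono := mul_log_mono (div_pos hh0 hn0) hx hη1
    have hL : Real.log (Real.exp 1 / ((h : ℝ) / n)) = 1 + Real.log ((n : ℝ) / h) := by
      rw [Real.log_div (by positivity) (by positivity), Real.log_exp,
        Real.log_div hh0.ne' hn0.ne', Real.log_div hn0.ne' hh0.ne']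
      ring
    rw [hL] at hmono
    have hlr : 0 ≤ Real.log ((n : ℝ) / h) := by
      refine Real.log_nonneg ?_
      rw [le_div_iff₀ hh0]
      simpa using (by exact_mod_cast hhn : (h : ℝ) ≤ n)
    have hhφ : h * (1 + Real.log ((n : ℝ) / h)) ≤ φ := by
      have : n * ((h : ℝ) / n * (1 + Real.log ((n : ℝ) / h)))
          ≤ n * (η * Real.log (Real.exp 1 / η)) := by gcongr
      have e : n * ((h : ℝ) / n * (1 + Real.log ((n : ℝ) / h)))
          = h * (1 + Real.log ((n : ℝ) / h)) := by field_simp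
      rw [hφ]; linarith
    have hch := log_choose_le n h hh1 hhn
    rw [hT, PenJ, if_neg (by omega), Real.log_mul (by positivity) (by positivity),
      Real.log_mul (by positivity) (by positivity), Real.log_inv, Real.log_rpow (by positivity)]
    refine mul_le_mul_of_nonneg_left ?_ (by positivity)
    have q1 : c₁ * (h * (1 + Real.log ((n : ℝ) / h))) ≤ c₁ * φ := by gcongr
    have q2 : Real.log (1 + γ) * (h * (1 + Real.log ((n : ℝ) / h)))
        ≤ Real.log (1 + γ) * φ := by gcongr
    have q3 : 0 ≤ c₁ * h := by positivity
    have q4 : 0 ≤ Real.log (1 + γ) * h * Real.log ((n : ℝ) / h) := by positivity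
    have q5 : 0 ≤ Real.log (1 + γ) * h := by positivity
    nlinarith
  · refine ⟨Finset.univ, Finset.subset_univ _, ?_, ?_⟩
    · intro he
      have := congrArg Finset.card he
      simp at this
      omega
    have hp := hpos n hn le_rfl
    rw [Finset.card_univ, Fintype.card_fin, PenJ, if_neg (by omega), Nat.choose_self,
      Nat.cast_one, mul_one, Real.log_mul (by positivity) (by positivity), Real.log_inv,
      Real.log_rpow (by positivity)]
    refine mul_le_mul_of_nonneg_left ?_ (by positivity)
    have hlogπ : -Real.log (π n) ≤ c₂ * n := by
      have := Real.log_le_log (by positivity) hπn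
      rw [Real.log_exp] at this
      linarith
    have hnφ : (n : ℝ) ≤ Real.exp c * φ := by
      have h1 : (n : ℝ) * Real.exp (-c) ≤ n * η := by
        rw [mul_comm (n : ℝ) η]; exact (not_le.1 hsmall).le.trans hhη
      have h2 : (n : ℝ) * η ≤ φ := by
        rw [hφ]; exact le_mul_of_one_le_right (by positivity) hone
      calc (n : ℝ) = Real.exp c * (n * Real.exp (-c)) := by
            rw [mul_left_comm, ← Real.exp_add]; simp
        _ ≤ Real.exp c * φ := by gcongr; exact h1.trans h2
    have q1 : (c₂ + Real.log (1 + γ)) * n ≤ (c₂ + Real.log (1 + γ)) * (Real.exp c * φ) := by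
      gcongr
    have q2 : 0 ≤ (n : ℝ) * Real.log (1 + γ) := by positivity
    nlinarith

/-- The constant comparing the penalty of the comparison model with the minimax rate. -/
def K2 (γ c₀ c₁ c₂ : ℝ) : ℝ :=
  K1 γ c₁ c₂ * (1 + Real.exp 1) + 2 * (1 + 1 / γ) * (c₀ + 2 + c₀ * Real.exp 1)

/-- A model containing the true supports whose penalty is of the order of the minimax rate. Its
active groups are those of `J0c` when `|J0c| ≤ m / e`, and all `m` groups otherwise, so that one
of the two conditions on `π0` is available. -/
lemma exists_model (n m : ℕ) (hn : 1 ≤ n) (σ γ c₀ c₁ c₂ : ℝ) (hγ : 0 < γ)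
    (hc₀ : 0 < c₀) (hc₁ : 0 < c₁) (hc₂ : 0 < c₂) (π0 : ℕ → ℝ) (πj : Fin m → ℕ → ℝ)
    (h0 : ∀ k, k ≤ m → 0 < π0 k)
    (hpos : ∀ j h, 1 ≤ h → h ≤ n → 0 < πj j h)
    (h0k : ∀ k : ℕ, 1 ≤ k → (k : ℝ) ≤ (m : ℝ) / Real.exp 1 →
          ((k : ℝ) / m) ^ (c₀ * (k : ℝ)) ≤ π0 k)
    (h0m : Real.exp (-(c₀ * m)) ≤ π0 m)
    (hπ : ∀ j, ∀ h : ℕ, 1 ≤ h → (h : ℝ) ≤ (n : ℝ) * Real.exp (-(8 * (γ + 3 / 4) ^ 2)) →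
      ((h : ℝ) / n) ^ (c₁ * (h : ℝ)) ≤ πj j h)
    (hπn : ∀ j, Real.exp (-(c₂ * n)) ≤ πj j n)
    (J0c : Finset (Fin m)) (hJ : J0c.Nonempty) (η : Fin m → ℝ)
    (hη : ∀ j ∈ J0c, 1 / (n : ℝ) ≤ η j ∧ η j ≤ 1) (μ : Fin m → Fin n → ℝ)
    (hμ0 : ∀ j ∉ J0c, μ j = 0) (hμ : ∀ j ∈ J0c, (l0norm (μ j) : ℝ) ≤ η j * n) :
    ∃ M : Fin m → Finset (Fin n), (∀ j, supp (μ j) ⊆ M j) ∧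
      penM n m σ γ π0 πj M ≤ K2 γ c₀ c₁ c₂ * max
        (∑ j ∈ J0c, σ ^ 2 * n * η j * Real.log (Real.exp 1 / η j))
        (σ ^ 2 * J0c.card * Real.log ((m : ℝ) / J0c.card)) := by
  have hn0 : (0 : ℝ) < n := by exact_mod_cast hn
  have hn1 : (1 : ℝ) / n ≤ 1 := by
    rw [div_le_one hn0]; exact_mod_cast hn
  have hlg : 0 ≤ Real.log (1 + γ) := Real.log_nonneg (by linarith)
  have hK1 : 0 ≤ K1 γ c₁ c₂ := by unfold K1; positivity
  let η' : Fin m → ℝ := fun j => if j ∈ J0c then η j else 1 / n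
  have hT : ∀ j, ∃ T, supp (μ j) ⊆ T ∧ T ≠ ∅ ∧ PenJ n σ γ (πj j) T.card
      ≤ K1 γ c₁ c₂ * (σ ^ 2 * n * η' j * Real.log (Real.exp 1 / η' j)) := by
    intro j
    by_cases h : j ∈ J0c
    · have e : η' j = η j := if_pos h
      rw [e]
      exact exists_superset_pen n hn σ γ c₁ c₂ hγ hc₁ hc₂ (πj j) (hpos j) (hπ j) (hπn j) (η j)
        (hη j h).1 (hη j h).2 _ (hμ j h)
    · have e : η' j = 1 / n := if_neg h
      rw [e]
      refine exists_superset_pen n hn σ γ c₁ c₂ hγ hc₁ hc₂ (πj j) (hpos j) (hπ j) (hπn j) (1 / n)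
        le_rfl hn1 _ ?_
      rw [(supp_eq_empty _).2 (hμ0 j h), Finset.card_empty, Nat.cast_zero]
      positivity
  choose T hT1 hT2 hT3 using hT
  set R : Fin m → ℝ := fun j => σ ^ 2 * n * η j * Real.log (Real.exp 1 / η j) with hR
  set r : ℝ := σ ^ 2 * n * (1 / n) * Real.log (Real.exp 1 / (1 / n)) with hr
  set X := ∑ j ∈ J0c, R j with hX
  set Y := σ ^ 2 * J0c.card * Real.log ((m : ℝ) / J0c.card) with hY
  have hTin : ∀ j ∈ J0c, PenJ n σ γ (πj j) (T j).card ≤ K1 γ c₁ c₂ * R j := by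
    intro j h
    have := hT3 j
    rwa [show η' j = η j from if_pos h] at this
  have hTout : ∀ j ∉ J0c, PenJ n σ γ (πj j) (T j).card ≤ K1 γ c₁ c₂ * r := by
    intro j h
    have := hT3 j
    rwa [show η' j = 1 / n from if_neg h] at this
  have hrR : ∀ j ∈ J0c, r ≤ R j := by
    intro j h
    have := mul_log_mono (by positivity) (hη j h).1 (hη j h).2
    have h2 : σ ^ 2 * n * (1 / n * Real.log (Real.exp 1 / (1 / n)))
      ≤ σ ^ 2 * n * (η j * Real.log (Real.exp 1 / η j)) := by gcongr
    simp only [hr, hR]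
    linarith
  have hσr : σ ^ 2 ≤ r := by
    have := one_le_log_div (η := 1 / (n : ℝ)) (by positivity) hn1
    have e : σ ^ 2 * n * (1 / n) = σ ^ 2 := by field_simp
    rw [hr, e]
    exact le_mul_of_one_le_right (by positivity) this
  have hm0r : J0c.card * r ≤ X := by
    rw [← nsmul_eq_mul]; exact Finset.card_nsmul_le_sum _ _ _ hrR
  have hcard : J0c.card ≤ m := by simpa using Finset.card_le_univ J0c
  have hm0 : (0 : ℝ) < J0c.card := by exact_mod_cast hJ.card_pos
  have hmpos : (0 : ℝ) < m := lt_of_lt_of_le hm0 (by exact_mod_cast hcard)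
  have hσX : J0c.card * σ ^ 2 ≤ X := le_trans (by gcongr) hm0r
  have hr0 : 0 ≤ r := le_trans (sq_nonneg σ) hσr
  have hX0 : 0 ≤ X := le_trans (by positivity) hm0r
  have hmaxX := le_max_left X Y
  have hmaxY := le_max_right X Y
  set Z := max X Y
  have hZ0 : 0 ≤ Z := hX0.trans hmaxX
  by_cases hA : (J0c.card : ℝ) ≤ m / Real.exp 1
  · refine ⟨fun j => if j ∈ J0c then T j else ∅, ?_, ?_⟩
    · intro j
      by_cases h : j ∈ J0c
      · simpa [h] using hT1 j
      · simp [h, (supp_eq_empty _).2 (hμ0 j h)]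
    have hf : (Finset.univ.filter fun j => (if j ∈ J0c then T j else ∅) ≠ ∅) = J0c := by
      ext j
      by_cases h : j ∈ J0c <;> simp [h, hT2 j]
    have hs : ∑ j, PenJ n σ γ (πj j) ((if j ∈ J0c then T j else ∅) : Finset (Fin n)).card
        ≤ K1 γ c₁ c₂ * X := by
      have e : ∀ j, PenJ n σ γ (πj j) ((if j ∈ J0c then T j else ∅) : Finset (Fin n)).card
          = if j ∈ J0c then PenJ n σ γ (πj j) (T j).card else 0 := by
        intro j
        by_cases h : j ∈ J0c <;> simp [h, PenJ]
      simp_rw [e]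
      rw [Finset.sum_ite_mem, Finset.univ_inter, hX, Finset.mul_sum]
      exact Finset.sum_le_sum hTin
    have hp0 : Pen0 m σ γ π0 J0c.card ≤ 2 * (1 + 1 / γ) * ((c₀ + 1) * Z + Z) := by
      have hC : (0 : ℝ) < m.choose J0c.card := by exact_mod_cast Nat.choose_pos hcard
      have hp := h0 _ hcard
      have hlogπ : -Real.log (π0 J0c.card) ≤ c₀ * J0c.card * Real.log ((m : ℝ) / J0c.card) := by
        have := Real.log_le_log (by positivity) (h0k _ hJ.card_pos hA)
        rw [Real.log_rpow (by positivity), Real.log_div hm0.ne' hmpos.ne'] at this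
        rw [Real.log_div hmpos.ne' hm0.ne']
        nlinarith
      have hch := log_choose_le m J0c.card hJ.card_pos hcard
      rw [Pen0, Real.log_mul (by positivity) (by positivity), Real.log_inv]
      have q : σ ^ 2 * (-Real.log (π0 J0c.card) + Real.log (m.choose J0c.card))
          ≤ (c₀ + 1) * Z + Z := by
        have q1 : σ ^ 2 * (-Real.log (π0 J0c.card) + Real.log (m.choose J0c.card))
            ≤ σ ^ 2 * (c₀ * J0c.card * Real.log ((m : ℝ) / J0c.card)
              + J0c.card * (1 + Real.log ((m : ℝ) / J0c.card))) := by gcongr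
        have q2 : (c₀ + 1) * Y ≤ (c₀ + 1) * Z := by gcongr
        rw [hY] at q2
        linarith
      calc 2 * σ ^ 2 * (1 + 1 / γ) * (-Real.log (π0 J0c.card) + Real.log (m.choose J0c.card))
          = 2 * (1 + 1 / γ)
            * (σ ^ 2 * (-Real.log (π0 J0c.card) + Real.log (m.choose J0c.card))) := by ring
        _ ≤ _ := by gcongr
    rw [penM, hf, K2]
    have q1 : K1 γ c₁ c₂ * X ≤ K1 γ c₁ c₂ * Z := by gcongr
    have q2 : 0 ≤ K1 γ c₁ c₂ * Real.exp 1 * Z := by positivity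
    have q3 : 0 ≤ 2 * (1 + 1 / γ) * (c₀ * Real.exp 1 * Z) := by positivity
    linarith
  · refine ⟨T, hT1, ?_⟩
    have hf : (Finset.univ.filter fun j => T j ≠ ∅) = Finset.univ := by
      ext j; simp [hT2 j]
    have hme : (m : ℝ) ≤ Real.exp 1 * J0c.card := by
      rw [not_le, div_lt_iff₀ (by positivity)] at hA
      linarith
    have hs : ∑ j, PenJ n σ γ (πj j) (T j).card ≤ K1 γ c₁ c₂ * X + m * (K1 γ c₁ c₂ * r) := by
      rw [← Finset.sum_add_sum_compl J0c]
      refine add_le_add ?_ ?_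
      · rw [hX, Finset.mul_sum]; exact Finset.sum_le_sum hTin
      · calc ∑ j ∈ J0cᶜ, PenJ n σ γ (πj j) (T j).card
            ≤ J0cᶜ.card • (K1 γ c₁ c₂ * r) :=
              Finset.sum_le_card_nsmul _ _ _ fun j h => hTout j (Finset.mem_compl.1 h)
          _ ≤ m * (K1 γ c₁ c₂ * r) := by
              rw [nsmul_eq_mul]
              gcongr
              simpa using Finset.card_le_univ J0cᶜ
    have hp0 : Pen0 m σ γ π0 m ≤ 2 * (1 + 1 / γ) * (c₀ * Real.exp 1 * Z) := by
      have hp := h0 m le_rfl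
      have hlogπ : -Real.log (π0 m) ≤ c₀ * m := by
        have := Real.log_le_log (by positivity) h0m
        rw [Real.log_exp] at this
        linarith
      rw [Pen0, Nat.choose_self, Nat.cast_one, mul_one, Real.log_inv]
      calc 2 * σ ^ 2 * (1 + 1 / γ) * -Real.log (π0 m)
          ≤ 2 * σ ^ 2 * (1 + 1 / γ) * (c₀ * (Real.exp 1 * J0c.card)) := by
            gcongr
            exact hlogπ.trans (by gcongr)
        _ = 2 * (1 + 1 / γ) * (c₀ * Real.exp 1 * (J0c.card * σ ^ 2)) := by ring
        _ ≤ _ := by gcongr; exact hσX.trans hmaxX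
    rw [penM, hf, Finset.card_univ, Fintype.card_fin, K2]
    have q1 : m * (K1 γ c₁ c₂ * r) ≤ K1 γ c₁ c₂ * Real.exp 1 * Z := by
      calc m * (K1 γ c₁ c₂ * r) ≤ (Real.exp 1 * J0c.card) * (K1 γ c₁ c₂ * r) := by gcongr
        _ = K1 γ c₁ c₂ * Real.exp 1 * (J0c.card * r) := by ring
        _ ≤ _ := by gcongr; exact hm0r.trans hmaxX
    have q2 : K1 γ c₁ c₂ * X ≤ K1 γ c₁ c₂ * Z := by gcongr
    have q3 : 0 ≤ 2 * (1 + 1 / γ) * ((c₀ + 2) * Z) := by positivity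
    linarith

/-! ### The oracle inequality -/

/-- The risk is bounded by the penalty of any model containing the true supports, the dimension of
the true supports, and a remainder of order `σ²`. -/
lemma risk_le (n m : ℕ) (σ γ a u κ : ℝ) (hσ : 0 < σ) (hγ : 0 < γ) (ha : 0 < a) (ha1 : a < 1)
    (hu : 0 < u) (hu1 : u < 1) (hκ : κ = (√(1 - u))⁻¹) (hκ2 : κ ^ 2 = 2 * (1 + γ))
    (hua : u * a * (1 + 1 / γ) = 1 + 1 / (4 * γ))
    (π0 : ℕ → ℝ) (πj : Fin m → ℕ → ℝ)
    (h0 : ∀ k, k ≤ m → 0 < π0 k) (h0s : ∑ k ∈ Finset.range (m + 1), π0 k = 1)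
    (hj : ∀ j h, 1 ≤ h → h ≤ n → 0 < πj j h)
    (hjs : ∀ j, ∑ h ∈ Finset.Icc 1 n, πj j h = 1)
    (hP : ∀ j h, 1 ≤ h → h ≤ n →
      πj j h ≤ (n.choose h : ℝ) * Real.exp (-(8 * (γ + 3 / 4) ^ 2) * h))
    (est : (Fin m → Fin n → ℝ) → Fin m → Fin n → ℝ)
    (hest : IsSparseGroupMAP n m σ γ π0 πj est) (μ : Fin m → Fin n → ℝ)
    (M : Fin m → Finset (Fin n)) (hM : ∀ j, supp (μ j) ⊆ M j) :
    groupRisk n m σ μ est ≤ ENNReal.ofReal (1 / (1 - a) * (penM n m σ γ π0 πj M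
      + 1 / a * (2 * σ ^ 2 / u * κ * ∑ j, ((supp (μ j)).card : ℝ)) + 2 * σ ^ 2 / (u * a))) := by
  have hκ0 : 0 < κ := by
    rw [hκ]; exact inv_pos.2 (Real.sqrt_pos.2 (by linarith))
  have ha' : 0 < 1 - a := by linarith
  set s : ℝ := u * a / (2 * σ ^ 2) with hs
  have hs0 : 0 < s := by positivity
  have hsu : s * (1 / a) = u / (2 * σ ^ 2) := by rw [hs]; field_simp
  have hsγ : s * (2 * σ ^ 2 * (1 + 1 / γ)) = 1 + 1 / (4 * γ) := by
    rw [← hua, hs]; field_simp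
  have hsinv : 2 * σ ^ 2 / (u * a) = 1 / s := by rw [hs]; field_simp
  rw [hsinv]
  have hpr : IsProbabilityMeasure (gaussianData n m σ μ) := by
    unfold gaussianData; infer_instance
  let E : (Fin m → Finset (Fin n)) → (Fin m → Fin n → ℝ) → ℝ := fun N y =>
    Real.exp (u / (2 * σ ^ 2) * noiseSq μ y N)
  let sg : Fin m → Fin n → Fin m → Finset (Fin n) := fun j i => Function.update (fun _ => ∅) j {i}
  have hEint : ∀ N, Integrable (E N) (gaussianData n m σ μ) := fun N =>
    noise_exp_integrable n m σ u hσ hu1 μ N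
  have hEval : ∀ N, ∫ y, E N y ∂(gaussianData n m σ μ) = ∏ j, κ ^ (N j).card := fun N => by
    rw [hκ]; exact noise_exp_integral n m σ u hσ hu1 μ N
  have hsg : ∀ j i, ∏ j', κ ^ (sg j i j').card = κ := by
    intro j i
    rw [Finset.prod_eq_single j]
    · simp [sg]
    · intro b _ hb; simp [sg, hb]
    · simp
  have hsgn : ∀ j i y, noiseSq μ y (sg j i) = (y j i - μ j i) ^ 2 := by
    intro j i y
    rw [noiseSq, Finset.sum_eq_single j]
    · simp [sg]
    · intro b _ hb; simp [sg, hb]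
    · simp
  set P := penM n m σ γ π0 πj with hPdef
  let G : (Fin m → Fin n → ℝ) → ℝ := fun y => P M
    + 1 / a * (∑ j, ∑ i ∈ supp (μ j), 2 * σ ^ 2 / u * E (sg j i) y)
    + 1 / s * ∑ N, Real.exp (-(s * P N)) * E N y
  -- the maximum over models is bounded by `x ≤ exp (s x) / s` and a union bound
  have hpt : ∀ y, (1 - a) * (∑ j, ∑ i, (est y j i - μ j i) ^ 2) ≤ G y := by
    intro y
    refine (basic_ineq n m σ γ a ha π0 πj y (est y) μ (hest.2 y) M hM).trans ?_
    refine add_le_add (add_le_add le_rfl ?_) ?_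
    · refine mul_le_mul_of_nonneg_left ?_ (by positivity)
      refine Finset.sum_le_sum fun j _ => Finset.sum_le_sum fun i _ => ?_
      simp only [E, hsgn]
      have h1 := Real.add_one_le_exp (u / (2 * σ ^ 2) * (y j i - μ j i) ^ 2)
      calc (y j i - μ j i) ^ 2
          = 2 * σ ^ 2 / u * (u / (2 * σ ^ 2) * (y j i - μ j i) ^ 2) := by field_simp
        _ ≤ _ := by
          refine mul_le_mul_of_nonneg_left ?_ (by positivity)
          linarith
    · set N := fun j => supp (est y j)
      have h1 : Real.exp (-(s * P N)) * E N y
          ≤ ∑ N, Real.exp (-(s * P N)) * E N y :=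
        Finset.single_le_sum (f := fun N => Real.exp (-(s * P N)) * E N y)
          (fun N _ => by positivity) (Finset.mem_univ N)
      have h2 : Real.exp (-(s * P N)) * E N y
          = Real.exp (s * (1 / a * noiseSq μ y N - P N)) := by
        simp only [E]
        rw [← Real.exp_add, ← hsu]
        congr 1; ring
      have h3 := Real.add_one_le_exp (s * (1 / a * noiseSq μ y N - P N))
      calc 1 / a * noiseSq μ y N - P N
          = 1 / s * (s * (1 / a * noiseSq μ y N - P N)) := by field_simp
        _ ≤ _ := by
          refine mul_le_mul_of_nonneg_left ?_ (by positivity)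
          linarith
  have hI1 : Integrable (fun y => ∑ j, ∑ i ∈ supp (μ j), 2 * σ ^ 2 / u * E (sg j i) y)
      (gaussianData n m σ μ) :=
    integrable_finsetSum _ fun j _ => integrable_finsetSum _ fun i _ => (hEint _).const_mul _
  have hI2 : Integrable (fun y => ∑ N, Real.exp (-(s * P N)) * E N y) (gaussianData n m σ μ) :=
    integrable_finsetSum _ fun N _ => (hEint _).const_mul _
  have hI3 : Integrable (fun y => P M
      + 1 / a * (∑ j, ∑ i ∈ supp (μ j), 2 * σ ^ 2 / u * E (sg j i) y)) (gaussianData n m σ μ) :=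
    (integrable_const _).add (hI1.const_mul _)
  have hGint : Integrable G (gaussianData n m σ μ) := hI3.add (hI2.const_mul _)
  have hGval : ∫ y, G y ∂(gaussianData n m σ μ) ≤ P M
      + 1 / a * (2 * σ ^ 2 / u * κ * ∑ j, ((supp (μ j)).card : ℝ)) + 1 / s := by
    simp only [G]
    rw [integral_add hI3 (hI2.const_mul _), integral_add (integrable_const _) (hI1.const_mul _),
      integral_const_mul, integral_const_mul,
      integral_finsetSum _ fun j _ => integrable_finsetSum _ fun i _ => (hEint _).const_mul _,
      integral_finsetSum _ fun N _ => (hEint _).const_mul _]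
    have e1 : ∀ j, ∫ y, ∑ i ∈ supp (μ j), 2 * σ ^ 2 / u * E (sg j i) y ∂(gaussianData n m σ μ)
        = 2 * σ ^ 2 / u * κ * ((supp (μ j)).card : ℝ) := by
      intro j
      rw [integral_finsetSum _ fun i _ => (hEint _).const_mul _]
      simp_rw [integral_const_mul, hEval, hsg]
      rw [Finset.sum_const, nsmul_eq_mul, mul_comm]
    simp_rw [e1, integral_const_mul, hEval]
    rw [← Finset.mul_sum, integral_const, probReal_univ, one_smul]
    refine add_le_add le_rfl ?_
    have h1 : ∑ N, Real.exp (-(s * P N)) * ∏ j, κ ^ (N j).card ≤ 1 :=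
      (Finset.sum_le_sum fun N _ =>
        exp_penM_le n m σ γ s κ hγ hκ0 hκ2 hsγ π0 πj h0 h0s hj hP N).trans
        (sum_wM_le_one n m π0 πj h0 h0s hj hjs)
    calc 1 / s * ∑ N, Real.exp (-(s * P N)) * ∏ j, κ ^ (N j).card ≤ 1 / s * 1 := by gcongr
      _ = 1 / s := mul_one _
  have hG0 : ∀ y, 0 ≤ 1 / (1 - a) * G y := by
    intro y
    have h1 : 0 ≤ (1 - a) * (∑ j, ∑ i, (est y j i - μ j i) ^ 2) := by positivity
    exact mul_nonneg (by positivity) (h1.trans (hpt y))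
  calc groupRisk n m σ μ est
      ≤ ∫⁻ y, ENNReal.ofReal (1 / (1 - a) * G y) ∂(gaussianData n m σ μ) := by
        refine lintegral_mono fun y => ENNReal.ofReal_le_ofReal ?_
        have := hpt y
        rw [one_div, inv_mul_eq_div, le_div_iff₀ ha', mul_comm]
        exact this
    _ = ENNReal.ofReal (∫ y, 1 / (1 - a) * G y ∂(gaussianData n m σ μ)) :=
        (ofReal_integral_eq_lintegral_ofReal (hGint.const_mul _) (ae_of_all _ hG0)).symm
    _ ≤ _ := by
        rw [integral_const_mul]
        exact ENNReal.ofReal_le_ofReal (mul_le_mul_of_nonneg_left hGval (by positivity))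

/-- upper bound over `l₀`-balls: for every `γ > 0`, `c₀, c₁′ > 0` and
`c₂′ > 8(γ+3/4)²` there is `C > 0` such that for all `n, m ≥ 1`, `σ > 0`, priors
satisfying Assumption (P) and the prior conditions, any nonempty `J₀ᶜ` with `|J₀ᶜ| = m₀`
and radii `η_{jn} ∈ [1/n, 1]`, any sparse group MAP estimator satisfies the minimax-rate
upper bound uniformly over means supported on `J₀ᶜ` with `μ_j ∈ l₀[η_{jn}]`. -/
theorem stmt1 (γ c₀ c₁' c₂' : ℝ) (hγ : 0 < γ) (hc₀ : 0 < c₀) (hc₁ : 0 < c₁')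
    (hc₂ : 8 * (γ + 3 / 4) ^ 2 < c₂') :
    ∃ C : ℝ, 0 < C ∧
      ∀ (n m : ℕ) (hn : 1 ≤ n) (hm : 1 ≤ m) (σ : ℝ) (hσ : 0 < σ)
        (π0 : ℕ → ℝ) (πj : Fin m → ℕ → ℝ),
        (∀ k, k ≤ m → 0 < π0 k) →
        (∑ k ∈ Finset.range (m + 1), π0 k) = 1 →
        (∀ j h, 1 ≤ h → h ≤ n → 0 < πj j h) →
        (∀ j, ∑ h ∈ Finset.Icc 1 n, πj j h = 1) →
        -- Assumption (P)
        (∀ j h, 1 ≤ h → h ≤ n →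
          πj j h ≤ (n.choose h : ℝ) * Real.exp (-(8 * (γ + 3 / 4) ^ 2) * h)) →
        -- prior conditions on π₀
        (∀ k : ℕ, 1 ≤ k → (k : ℝ) ≤ (m : ℝ) / Real.exp 1 →
          ((k : ℝ) / m) ^ (c₀ * (k : ℝ)) ≤ π0 k) →
        Real.exp (-(c₀ * m)) ≤ π0 m →
        -- prior conditions on π_j
        (∀ j, ∀ h : ℕ, 1 ≤ h → (h : ℝ) ≤ (n : ℝ) * Real.exp (-(8 * (γ + 3 / 4) ^ 2)) →
          ((h : ℝ) / n) ^ (c₁' * (h : ℝ)) ≤ πj j h) →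
        (∀ j, Real.exp (-(c₂' * n)) ≤ πj j n) →
        ∀ (J0c : Finset (Fin m)), J0c.Nonempty →
        ∀ (η : Fin m → ℝ), (∀ j ∈ J0c, 1 / (n : ℝ) ≤ η j ∧ η j ≤ 1) →
        ∀ (est : (Fin m → Fin n → ℝ) → Fin m → Fin n → ℝ),
          IsSparseGroupMAP n m σ γ π0 πj est →
          ∀ μ : Fin m → Fin n → ℝ,
            (∀ j ∉ J0c, μ j = 0) →
            (∀ j ∈ J0c, (l0norm (μ j) : ℝ) ≤ η j * n) →
            groupRisk n m σ μ est ≤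
              ENNReal.ofReal (C * max
                (∑ j ∈ J0c, σ ^ 2 * n * η j * Real.log (Real.exp 1 / η j))
                (σ ^ 2 * J0c.card * Real.log ((m : ℝ) / J0c.card))) := by
  have hc₂0 : 0 < c₂' := lt_of_le_of_lt (by positivity) hc₂
  -- `u` and `a` solve `u a (1 + 1/γ) = 1 + 1/(4γ)` with `u, a < 1` and `1/(1-u) = 2(1+γ)`; by
  -- Assumption (P) the excess `1/(4γ)` over `1` compensates the factor `2` in `2(1+γ)`
  set a : ℝ := (4 * γ + 1) / (4 * γ + 2) with ha
  set u : ℝ := (γ + 1 / 2) / (1 + γ) with hu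
  set κ : ℝ := (√(1 - u))⁻¹ with hκ
  have ha0 : 0 < a := by positivity
  have ha1 : a < 1 := by rw [ha, div_lt_one (by positivity)]; linarith
  have hu0 : 0 < u := by positivity
  have hu1 : u < 1 := by rw [hu, div_lt_one (by positivity)]; linarith
  have hua : u * a * (1 + 1 / γ) = 1 + 1 / (4 * γ) := by
    rw [hu, ha]; field_simp; ring
  have hκ2 : κ ^ 2 = 2 * (1 + γ) := by
    have h1 : 1 - u = (2 * (1 + γ))⁻¹ := by rw [hu]; field_simp; ring
    rw [hκ, inv_pow, Real.sq_sqrt (by linarith), h1, inv_inv]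
  have hκ0 : 0 < κ := inv_pos.2 (Real.sqrt_pos.2 (by linarith))
  have ha' : 0 < 1 - a := by linarith
  have hlg : 0 ≤ Real.log (1 + γ) := Real.log_nonneg (by linarith)
  have hK2 : 0 < K2 γ c₀ c₁' c₂' := by unfold K2 K1; positivity
  refine ⟨1 / (1 - a) * (K2 γ c₀ c₁' c₂' + 1 / a * (2 / u * κ) + 2 / (u * a)), by positivity, ?_⟩
  intro n m hn hm σ hσ π0 πj h0 h0s hj hjs hP h0k h0m hπ hπn J0c hJ η hη est hest μ hμ0 hμ
  obtain ⟨M, hM, hMpen⟩ := exists_model n m hn σ γ c₀ c₁' c₂' hγ hc₀ hc₁ hc₂0 π0 πj h0 hj h0k h0m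
    hπ hπn J0c hJ η hη μ hμ0 hμ
  refine (risk_le n m σ γ a u κ hσ hγ ha0 ha1 hu0 hu1 hκ hκ2 hua π0 πj h0 h0s hj hjs hP est hest μ
    M hM).trans (ENNReal.ofReal_le_ofReal ?_)
  set X := ∑ j ∈ J0c, σ ^ 2 * n * η j * Real.log (Real.exp 1 / η j) with hX
  set Z := max X (σ ^ 2 * J0c.card * Real.log ((m : ℝ) / J0c.card)) with hZ
  have hXZ : X ≤ Z := le_max_left _ _
  have hn0 : (0 : ℝ) < n := by exact_mod_cast hn
  have hterm : ∀ j ∈ J0c, σ ^ 2 * (n * η j) ≤ σ ^ 2 * n * η j * Real.log (Real.exp 1 / η j) := by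
    intro j h
    have h1 : 0 < η j := lt_of_lt_of_le (by positivity) (hη j h).1
    rw [← mul_assoc]
    exact le_mul_of_one_le_right (by positivity) (one_le_log_div h1 (hη j h).2)
  have hD : σ ^ 2 * ∑ j, ((supp (μ j)).card : ℝ) ≤ X := by
    have e : ∑ j, ((supp (μ j)).card : ℝ) = ∑ j ∈ J0c, ((supp (μ j)).card : ℝ) := by
      refine (Finset.sum_subset (Finset.subset_univ _) fun j _ h => ?_).symm
      rw [(supp_eq_empty _).2 (hμ0 j h)]
      simp
    rw [e, Finset.mul_sum]
    refine Finset.sum_le_sum fun j h => le_trans ?_ (hterm j h)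
    refine mul_le_mul_of_nonneg_left ?_ (by positivity)
    rw [mul_comm]
    exact hμ j h
  have hσX : σ ^ 2 ≤ X := by
    obtain ⟨j, h⟩ := hJ
    have h1 : ∀ i ∈ J0c, σ ^ 2 ≤ σ ^ 2 * n * η i * Real.log (Real.exp 1 / η i) := by
      intro i hi
      refine le_trans ?_ (hterm i hi)
      have := (hη i hi).1
      rw [div_le_iff₀ hn0] at this
      exact le_mul_of_one_le_right (by positivity) (by linarith)
    exact (h1 j h).trans (Finset.single_le_sum
      (f := fun i => σ ^ 2 * n * η i * Real.log (Real.exp 1 / η i))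
      (fun i hi => le_trans (by positivity) (h1 i hi)) h)
  refine le_trans (mul_le_mul_of_nonneg_left ?_ (by positivity)) (mul_assoc _ _ _).ge
  have q1 : 1 / a * (2 * σ ^ 2 / u * κ * ∑ j, ((supp (μ j)).card : ℝ))
      ≤ 1 / a * (2 / u * κ) * Z := by
    calc 1 / a * (2 * σ ^ 2 / u * κ * ∑ j, ((supp (μ j)).card : ℝ))
        = 1 / a * (2 / u * κ) * (σ ^ 2 * ∑ j, ((supp (μ j)).card : ℝ)) := by ring
      _ ≤ _ := by gcongr; exact hD.trans hXZ
  have q2 : 2 * σ ^ 2 / (u * a) ≤ 2 / (u * a) * Z := by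
    calc 2 * σ ^ 2 / (u * a) = 2 / (u * a) * σ ^ 2 := by ring
      _ ≤ _ := by gcongr; exact hσX.trans hXZ
  calc _ ≤ K2 γ c₀ c₁' c₂' * Z + 1 / a * (2 / u * κ) * Z + 2 / (u * a) * Z :=
        add_le_add (add_le_add hMpen q1) q2
    _ = _ := by ring
end
end

section
/- For every γ > 0, constants c₀, c₁′ > 0, c₂′ > 8(γ+3/4)², and every p̄ > 2, there exists a constant C > 0 depending only on γ, c₀, c₁′, c₂′, p̄ such that the following holds. For all n ≥ 2, m ≥ 1 and σ > 0, if the priors satisfy Assumption (P) and the prior conditions, J₀ᶜ ⊆ {1,…,m} is nonempty with |J₀ᶜ| = m₀, and for each j ∈ J₀ᶜ one has p_j ≥ p̄ and √(ln n / n) ≤ η_{jn} ≤ 1, then for any sparse group MAP estimator, sup over all means with μ_j = 0 for j ∉ J₀ᶜ and μ_j ∈ m_{p_j}[η_{jn}] for j ∈ J₀ᶜ of ∑_{j=1}^m E‖μ̂_j − μ_j‖₂² ≤ C · max( ∑_{j ∈ J₀ᶜ} σ² n η_{jn}², σ² m₀ ln(m/m₀) ). -/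
/-!
The proof combines an oracle inequality for the penalised criterion with one explicit comparison
point.

*Oracle inequality* (`oracle`). Write `ε = y - μ`. Comparing the criterion at the estimator and at a
fixed `μt` bounds the loss by `‖μ - μt‖² + P(μt)`, a centred linear term in `ε`, and
`2⟨ε, μ̂ - μ⟩ - P(μ̂)`. For a vector supported on `S`, the quantity `2⟨ε, u - μ⟩ - a‖u - μ‖²` is at
most a sum of independent coordinate gains (`coordGain`): `ε² / a` on the support, and a linear term
with a quadratic compensator off the support. Their exponential moment at level `l / σ²` is at most
`(1 + θ)^(|S|/2)` with `θ = 3γ/2` (`config_exp`). Assumption (P) provides the room that allows `θ`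
slightly larger than `γ`, hence `a < 1`; the exponential moments weighted by `exp(-l P(S) / σ²)` are
then dominated by the prior probability of `S`, so that their sum over all configurations is at most
`1` (`exp_PenJ_le`, `exp_Pen0_le`, `sum_config_le`). Since `t ≤ exp t - 1`, the random maximum
contributes nothing in expectation, and the risk is at most `(1 - a)⁻¹ (‖μ - μt‖² + P(μt))`.

*Comparison point.* For `p > 2` the squared norm of every element of a weak `l_p`-ball is already
`O(σ² n η²)` (`weakLp_sq_le`), so `μt` need not approximate `μ`: it only needs cheap penalties. A
support size with within-group penalty `O(σ² ln n)`, hence `O(σ² n η²)`, is supplied by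
`exists_PenJ_le`, and a set of active groups with cheap between-group penalty by `exists_Pen0_le`.
-/


open MeasureTheory ProbabilityTheory Finset
open scoped ENNReal NNReal

noncomputable section

/-- Membership in the weak `l_p`-ball `m_p[η]` (with noise level `σ`):
`|μ|_{(i)} ≤ σ η (n/i)^{1/p}` for all paper indices `i = 1,…,n` (0-indexed here). -/
def memWeakLp {n : ℕ} (σ p η : ℝ) (v : Fin n → ℝ) : Prop :=
  ∀ i : Fin n, ordAbs v i ≤ σ * η * ((n : ℝ) / ((i : ℕ) + 1)) ^ (1 / p)

/-! ### Exponential moments of the Gaussian gains -/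

/-- Exponential square moment of a Gaussian: `E exp(t ε²) = √(1+θ)` at
`t = θ / (2(1+θ)σ²)`. -/
lemma gauss_sq {σ θ : ℝ} (hσ : 0 < σ) (hθ : 0 < θ) (μ : ℝ) :
    Integrable (fun x => Real.exp (θ / (2 * (1 + θ) * σ ^ 2) * (x - μ) ^ 2))
      (gaussianReal μ ((σ ^ 2).toNNReal)) ∧
    ∫ x, Real.exp (θ / (2 * (1 + θ) * σ ^ 2) * (x - μ) ^ 2)
      ∂(gaussianReal μ ((σ ^ 2).toNNReal)) = √(1 + θ) := by
  have hv : (σ ^ 2).toNNReal ≠ 0 := by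
    simp only [ne_eq, Real.toNNReal_eq_zero, not_le]; positivity
  have hvr : (((σ ^ 2).toNNReal : ℝ≥0) : ℝ) = σ ^ 2 := Real.coe_toNNReal _ (by positivity)
  have key : ∀ x, gaussianPDFReal μ ((σ ^ 2).toNNReal) x *
      Real.exp (θ / (2 * (1 + θ) * σ ^ 2) * (x - μ) ^ 2)
      = (√(2 * Real.pi * σ ^ 2))⁻¹ * Real.exp (-(1 / (2 * (1 + θ) * σ ^ 2)) * (x - μ) ^ 2) := by
    intro x
    rw [gaussianPDFReal, hvr, mul_assoc, ← Real.exp_add]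
    congr 2
    field_simp
    ring
  have hb : 0 < 1 / (2 * (1 + θ) * σ ^ 2) := by positivity
  constructor
  · rw [gaussianReal_of_var_ne_zero _ hv, integrable_withDensity_iff_integrable_smul'
      (measurable_gaussianPDF _ _) (ae_of_all _ fun _ ↦ gaussianPDF_lt_top)]
    simp only [toReal_gaussianPDF, smul_eq_mul, key]
    exact ((integrable_exp_neg_mul_sq hb).comp_sub_right μ).const_mul _
  · rw [integral_gaussianReal_eq_integral_smul hv]
    simp only [smul_eq_mul, key]
    rw [integral_const_mul,
      integral_sub_right_eq_self (fun x => Real.exp (-(1 / (2 * (1 + θ) * σ ^ 2)) * x ^ 2)) μ,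
      integral_gaussian, ← Real.sqrt_inv, ← Real.sqrt_mul (by positivity)]
    congr 1
    field_simp

lemma gauss_lin (σ : ℝ) (μ t : ℝ) :
    Integrable (fun x => Real.exp (t * (x - μ))) (gaussianReal μ ((σ ^ 2).toNNReal)) ∧
    ∫ x, Real.exp (t * (x - μ)) ∂(gaussianReal μ ((σ ^ 2).toNNReal))
      = Real.exp (σ ^ 2 * t ^ 2 / 2) := by
  have hvr : (((σ ^ 2).toNNReal : ℝ≥0) : ℝ) = σ ^ 2 := Real.coe_toNNReal _ (by positivity)
  have e : ∀ x, Real.exp (t * (x - μ)) = Real.exp (-(t * μ)) * Real.exp (t * x) := by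
    intro x; rw [← Real.exp_add]; ring_nf
  simp only [e]
  refine ⟨(integrable_exp_mul_gaussianReal t).const_mul _, ?_⟩
  rw [integral_const_mul]
  have := mgf_gaussianReal (p := gaussianReal μ ((σ ^ 2).toNNReal)) (X := id)
    (μ := μ) (v := (σ ^ 2).toNNReal) (by simp) t
  simp only [mgf, id] at this
  rw [this, hvr, ← Real.exp_add]
  ring_nf

/-- The largest value, over the coordinate `u` of a vector with prescribed support, of
`2 (x - μ) (u - μ) - a (u - μ)²`: on the support (`b` true) `u` is free and the value is
`(x - μ)² / a`; off the support `u = 0`. -/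
def coordGain (a μ : ℝ) (b : Prop) [Decidable b] (x : ℝ) : ℝ :=
  if b then (x - μ) ^ 2 / a else -2 * (x - μ) * μ - a * μ ^ 2

lemma le_coordGain {a : ℝ} (ha : 0 < a) (μ x u : ℝ) (b : Prop) [Decidable b] (h : ¬ b → u = 0) :
    2 * (x - μ) * (u - μ) - a * (u - μ) ^ 2 ≤ coordGain a μ b x := by
  unfold coordGain
  split_ifs with hb
  · rw [le_div_iff₀ ha]
    nlinarith [sq_nonneg ((x - μ) - a * (u - μ))]
  · rw [h hb]; apply le_of_eq; ring

lemma coordGain_exp {σ θ a l : ℝ} (hσ : 0 < σ) (hθ : 0 < θ) (ha : 0 < a)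
    (hl : 2 * l = a * (θ / (1 + θ))) (μ : ℝ) (b : Prop) [Decidable b] :
    Integrable (fun x => Real.exp (l / σ ^ 2 * coordGain a μ b x))
      (gaussianReal μ ((σ ^ 2).toNNReal)) ∧
    ∫ x, Real.exp (l / σ ^ 2 * coordGain a μ b x) ∂(gaussianReal μ ((σ ^ 2).toNNReal))
      ≤ if b then √(1 + θ) else 1 := by
  have hl' : l = a * (θ / (1 + θ)) / 2 := by linarith
  by_cases hb : b
  · have e : ∀ x, l / σ ^ 2 * coordGain a μ b x = θ / (2 * (1 + θ) * σ ^ 2) * (x - μ) ^ 2 := by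
      intro x
      simp only [coordGain, hb, if_true, hl']
      field_simp
    simp only [e]
    rw [if_pos hb]
    exact ⟨(gauss_sq hσ hθ μ).1, (gauss_sq hσ hθ μ).2.le⟩
  · have e : ∀ x, Real.exp (l / σ ^ 2 * coordGain a μ b x)
        = Real.exp (-(l / σ ^ 2 * (a * μ ^ 2))) * Real.exp ((-2 * l * μ / σ ^ 2) * (x - μ)) := by
      intro x
      simp only [coordGain, hb, if_false]
      rw [← Real.exp_add]
      congr 1
      ring
    simp only [e]
    rw [if_neg hb]
    refine ⟨(gauss_lin σ μ _).1.const_mul _, ?_⟩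
    rw [integral_const_mul, (gauss_lin σ μ _).2, ← Real.exp_add, Real.exp_le_one_iff]
    have h1 : 2 * l ≤ a := by
      rw [hl]
      have : θ / (1 + θ) ≤ 1 := by rw [div_le_one (by positivity)]; linarith
      nlinarith
    have h2 : 0 ≤ l := by rw [hl']; positivity
    have : -(l / σ ^ 2 * (a * μ ^ 2)) + σ ^ 2 * (-2 * l * μ / σ ^ 2) ^ 2 / 2
        = - (l * μ ^ 2 / σ ^ 2 * (a - 2 * l)) := by
      field_simp
      ring
    rw [this, neg_nonpos]
    have : 0 ≤ a - 2 * l := by linarith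
    positivity

instance (n m : ℕ) (σ : ℝ) (μ : Fin m → Fin n → ℝ) :
    IsProbabilityMeasure (gaussianData n m σ μ) := by
  unfold gaussianData; infer_instance

/-- Product form of the exponential moment of the total gain of a support configuration `S`. -/
lemma config_exp {n m : ℕ} {σ θ a l : ℝ} (hσ : 0 < σ) (hθ : 0 < θ) (ha : 0 < a)
    (hl : 2 * l = a * (θ / (1 + θ))) (μ : Fin m → Fin n → ℝ) (S : Fin m → Finset (Fin n)) :
    Integrable (fun y : Fin m → Fin n → ℝ =>
        ∏ j, ∏ i, Real.exp (l / σ ^ 2 * coordGain a (μ j i) (i ∈ S j) (y j i)))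
      (gaussianData n m σ μ) ∧
    ∫ y, ∏ j, ∏ i, Real.exp (l / σ ^ 2 * coordGain a (μ j i) (i ∈ S j) (y j i))
      ∂(gaussianData n m σ μ) ≤ ∏ j, √(1 + θ) ^ (S j).card := by
  have hI : ∀ j, Integrable (fun z : Fin n → ℝ =>
      ∏ i, Real.exp (l / σ ^ 2 * coordGain a (μ j i) (i ∈ S j) (z i)))
      (Measure.pi fun i => gaussianReal (μ j i) ((σ ^ 2).toNNReal)) := fun j =>
    Integrable.fintype_prod_dep
      (f := fun i x => Real.exp (l / σ ^ 2 * coordGain a (μ j i) (i ∈ S j) x))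
      (fun i => (coordGain_exp hσ hθ ha hl (μ j i) (i ∈ S j)).1)
  constructor
  · exact Integrable.fintype_prod_dep
      (f := fun j (z : Fin n → ℝ) =>
        ∏ i, Real.exp (l / σ ^ 2 * coordGain a (μ j i) (i ∈ S j) (z i))) hI
  · unfold gaussianData
    rw [integral_fintype_prod_eq_prod (f := fun j (z : Fin n → ℝ) =>
        ∏ i, Real.exp (l / σ ^ 2 * coordGain a (μ j i) (i ∈ S j) (z i)))]
    refine Finset.prod_le_prod (fun j _ => integral_nonneg fun z => by positivity) fun j _ => ?_
    rw [integral_fintype_prod_eq_prod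
      (f := fun i x => Real.exp (l / σ ^ 2 * coordGain a (μ j i) (i ∈ S j) x))]
    calc _ ≤ ∏ i, (if i ∈ S j then √(1 + θ) else 1) :=
          Finset.prod_le_prod (fun i _ => integral_nonneg fun x => by positivity)
            fun i _ => (coordGain_exp hσ hθ ha hl (μ j i) (i ∈ S j)).2
      _ = √(1 + θ) ^ (S j).card := by
          rw [Finset.prod_ite_mem, Finset.univ_inter, Finset.prod_const]

lemma integral_noise {n m : ℕ} (σ : ℝ) (μ c : Fin m → Fin n → ℝ) :
    Integrable (fun y : Fin m → Fin n → ℝ => ∑ j, ∑ i, (y j i - μ j i) * c j i)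
      (gaussianData n m σ μ) ∧
    ∫ y, ∑ j, ∑ i, (y j i - μ j i) * c j i ∂(gaussianData n m σ μ) = 0 := by
  have hx : ∀ j i, Integrable (fun x : ℝ => x) (gaussianReal (μ j i) ((σ ^ 2).toNNReal)) :=
    fun j i => (memLp_id_gaussianReal 1).integrable (by simp)
  have hid : ∀ j i, Integrable (fun x : ℝ => x - μ j i)
      (gaussianReal (μ j i) ((σ ^ 2).toNNReal)) := fun j i =>
    (hx j i).sub (integrable_const _)
  have hid2 : ∀ j i, Integrable (fun z : Fin n → ℝ => z i - μ j i)
      (Measure.pi fun i => gaussianReal (μ j i) ((σ ^ 2).toNNReal)) := fun j i =>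
    integrable_comp_eval (μ := fun i => gaussianReal (μ j i) ((σ ^ 2).toNNReal)) (hid j i)
  have hid3 : ∀ j i, Integrable (fun y : Fin m → Fin n → ℝ => y j i - μ j i)
      (gaussianData n m σ μ) := fun j i =>
    integrable_comp_eval (μ := fun j => Measure.pi fun i =>
      gaussianReal (μ j i) ((σ ^ 2).toNNReal)) (f := fun z => z i - μ j i) (hid2 j i)
  have h0 : ∀ j i, ∫ y, (y j i - μ j i) ∂(gaussianData n m σ μ) = 0 := by
    intro j i
    unfold gaussianData
    rw [integral_comp_eval (μ := fun j => Measure.pi fun i =>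
      gaussianReal (μ j i) ((σ ^ 2).toNNReal)) (f := fun z : Fin n → ℝ => z i - μ j i)
      (hid2 j i).1, integral_comp_eval (μ := fun i => gaussianReal (μ j i) ((σ ^ 2).toNNReal))
      (f := fun x : ℝ => x - μ j i) (hid j i).1,
      integral_sub (hx j i) (integrable_const _)]
    simp
  have hs := fun j i => (hid3 j i).mul_const (c j i)
  refine ⟨integrable_finsetSum _ fun j _ => integrable_finsetSum _ fun i _ => hs j i, ?_⟩
  rw [integral_finsetSum _ fun j _ => integrable_finsetSum _ fun i _ => hs j i]
  refine Finset.sum_eq_zero fun j _ => ?_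
  rw [integral_finsetSum _ fun i _ => hs j i]
  refine Finset.sum_eq_zero fun i _ => ?_
  rw [integral_mul_const, h0, zero_mul]

/-! ### Sums over support configurations -/

/-- Summation over support configurations, organised by the set `K` of nonzero groups: when the
weights of nonempty supports sum to at most one in each group, the inner sum over the supports
with nonzero groups exactly `K` factorises and is at most one. -/
lemma sum_config_le {n m : ℕ} (F : ℕ → ℝ) (hF : ∀ k ≤ m, 0 ≤ F k)
    (q : Fin m → Finset (Fin n) → ℝ) (hq : ∀ j T, 0 ≤ q j T) (hq0 : ∀ j, q j ∅ = 1)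
    (hq1 : ∀ j, ∑ T ∈ Finset.univ.erase ∅, q j T ≤ 1) :
    ∑ S : Fin m → Finset (Fin n),
      F (Finset.univ.filter fun j => S j ≠ ∅).card * ∏ j, q j (S j)
      ≤ ∑ k ∈ Finset.range (m + 1), (m.choose k : ℝ) * F k := by
  classical
  have h1 : ∑ K : Finset (Fin m), F K.card
      = ∑ k ∈ Finset.range (m + 1), (m.choose k : ℝ) * F k := by
    have := Finset.sum_powerset_apply_card F (x := (Finset.univ : Finset (Fin m)))
    simpa [nsmul_eq_mul] using this
  rw [← h1, ← Finset.sum_fiberwise (Finset.univ : Finset (Fin m → Finset (Fin n)))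
    (fun S => Finset.univ.filter fun j => S j ≠ ∅)]
  refine Finset.sum_le_sum fun K _ => ?_
  have h2 : (Finset.univ.filter fun S : Fin m → Finset (Fin n) =>
      (Finset.univ.filter fun j => S j ≠ ∅) = K)
      = Fintype.piFinset fun j => if j ∈ K then Finset.univ.erase ∅ else {∅} := by
    ext S
    simp only [Finset.mem_filter, Finset.mem_univ, true_and, Fintype.mem_piFinset]
    constructor
    · rintro rfl j
      by_cases h : S j = ∅ <;> simp [h]
    · intro h
      ext j
      have := h j
      by_cases hj : j ∈ K <;> simp_all
  have h3 : ∑ S ∈ (Finset.univ.filter fun S : Fin m → Finset (Fin n) =>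
      (Finset.univ.filter fun j => S j ≠ ∅) = K),
        F (Finset.univ.filter fun j => S j ≠ ∅).card * ∏ j, q j (S j)
      = F K.card * ∏ j, ∑ T ∈ (if j ∈ K then Finset.univ.erase ∅ else {∅}), q j T := by
    rw [Finset.prod_univ_sum, ← h2, Finset.mul_sum]
    refine Finset.sum_congr rfl fun S hS => ?_
    rw [(Finset.mem_filter.1 hS).2]
  rw [h3]
  refine mul_le_of_le_one_right (hF _ (by simpa using Finset.card_le_univ K)) ?_
  refine Finset.prod_le_one (fun j _ => Finset.sum_nonneg fun T _ => hq j T) fun j _ => ?_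
  split_ifs
  · exact hq1 j
  · simp [hq0]

lemma sum_support_weights {n : ℕ} (π : ℕ → ℝ) (hsum : ∑ h ∈ Finset.Icc 1 n, π h = 1) :
    ∑ T ∈ (Finset.univ : Finset (Finset (Fin n))).erase ∅, π T.card / (n.choose T.card : ℝ)
      = 1 := by
  classical
  set f : ℕ → ℝ := fun h => if h = 0 then 0 else π h / (n.choose h : ℝ) with hf
  have h1 : ∑ T : Finset (Fin n), f T.card
      = ∑ k ∈ Finset.range (n + 1), (n.choose k : ℝ) * f k := by
    have := Finset.sum_powerset_apply_card f (x := (Finset.univ : Finset (Fin n)))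
    simpa [nsmul_eq_mul] using this
  have h2 : ∑ T ∈ (Finset.univ : Finset (Finset (Fin n))).erase ∅,
      π T.card / (n.choose T.card : ℝ) = ∑ T : Finset (Fin n), f T.card := by
    rw [← Finset.sum_erase (a := ∅) Finset.univ (by simp [hf])]
    refine Finset.sum_congr rfl fun T hT => ?_
    have : T ≠ ∅ := (Finset.mem_erase.1 hT).1
    simp [hf, this]
  rw [h2, h1, ← hsum, Finset.range_eq_Ico, Finset.sum_eq_sum_Ico_succ_bot (by omega)]
  simp only [hf, if_true, mul_zero, zero_add]
  refine Finset.sum_congr (by ext; simp) fun k hk => ?_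
  rw [Finset.mem_Icc] at hk
  have : (n.choose k : ℝ) ≠ 0 := by
    have := Nat.choose_pos hk.2
    positivity
  rw [if_neg (by omega)]
  field_simp

/-! ### Penalties against exponential moments -/

/-- The within-group penalty dominates the exponential moment of the gain. Assumption (P)
supplies `log (C(n,h)/π(h)) ≥ c(γ) h`, and the `1/(4(1+γ))` fraction of this quantity pays for
the passage from `log (1+γ)` to `log (1+3γ/2)`. -/
lemma exp_PenJ_le {γ σ : ℝ} (hγ : 0 < γ) {n h : ℕ} (π : ℕ → ℝ)
    (hπ : 0 < π h) (h1 : 1 ≤ h) (hn : h ≤ n)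
    (hP : π h ≤ (n.choose h : ℝ) * Real.exp (-(8 * (γ + 3 / 4) ^ 2) * h)) (L : ℝ)
    (hL : L * (2 * σ ^ 2 * (1 + 1 / γ)) = 1 + 1 / (4 * (1 + γ))) :
    Real.exp (-(L * PenJ n σ γ π h)) * √(1 + 3 * γ / 2) ^ h ≤ π h / (n.choose h : ℝ) := by
  have hC : (0 : ℝ) < n.choose h := by exact_mod_cast Nat.choose_pos hn
  set x := Real.log ((n.choose h : ℝ) / π h) with hx
  have hxr : π h / (n.choose h : ℝ) = Real.exp (-x) := by
    rw [hx, Real.exp_neg, Real.exp_log (by positivity), inv_div]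
  have hxl : (8 * (γ + 3 / 4) ^ 2) * h ≤ x := by
    rw [hx, Real.le_log_iff_exp_le (by positivity), le_div_iff₀ hπ]
    calc _ ≤ Real.exp (8 * (γ + 3 / 4) ^ 2 * h) *
          ((n.choose h : ℝ) * Real.exp (-(8 * (γ + 3 / 4) ^ 2) * h)) := by gcongr
      _ = (n.choose h : ℝ) * (Real.exp (8 * (γ + 3 / 4) ^ 2 * h) *
          Real.exp (-(8 * (γ + 3 / 4) ^ 2) * h)) := by ring
      _ = _ := by rw [← Real.exp_add]; simp
  have hpen : L * PenJ n σ γ π h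
      = (1 + 1 / (4 * (1 + γ))) * (x + h / 2 * Real.log (1 + γ)) := by
    rw [PenJ, if_neg (by omega), ← mul_assoc, hL, Real.log_mul (by positivity) (by positivity),
      Real.log_rpow (by positivity), hx]
    rw [show (π h)⁻¹ * (n.choose h : ℝ) = (n.choose h : ℝ) / π h by ring]
  have hs : √(1 + 3 * γ / 2) ^ h = Real.exp (h / 2 * Real.log (1 + 3 * γ / 2)) := by
    rw [mul_comm (_ / _ : ℝ), Real.exp_mul, Real.exp_log (by positivity), Real.sqrt_eq_rpow,
      ← Real.rpow_natCast, ← Real.rpow_mul (by positivity)]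
    ring_nf
  have hlog : Real.log (1 + 3 * γ / 2) ≤ Real.log (1 + γ) + γ / (2 * (1 + γ)) := by
    have e : 1 + 3 * γ / 2 = (1 + γ) * (1 + γ / (2 * (1 + γ))) := by field_simp; ring
    rw [e, Real.log_mul (by positivity) (by positivity)]
    have := Real.log_le_sub_one_of_pos (x := 1 + γ / (2 * (1 + γ))) (by positivity)
    linarith
  have hl0 : 0 ≤ Real.log (1 + γ) := Real.log_nonneg (by linarith)
  rw [hxr, hpen, hs, ← Real.exp_add, Real.exp_le_exp]
  have hd : 0 < 1 / (4 * (1 + γ)) := by positivity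
  have hγe : γ / (2 * (1 + γ)) = 2 * γ * (1 / (4 * (1 + γ))) := by field_simp; norm_num
  rw [hγe] at hlog
  set d := 1 / (4 * (1 + γ)) with hdd
  have hh : (0 : ℝ) ≤ h := by positivity
  have a1 : (h : ℝ) / 2 * Real.log (1 + 3 * γ / 2)
      ≤ h / 2 * (Real.log (1 + γ) + 2 * γ * d) := by gcongr
  have a2 : d * (8 * (γ + 3 / 4) ^ 2 * h) ≤ d * x := by gcongr
  have a3 : 0 ≤ d * (h / 2 * Real.log (1 + γ)) := by positivity
  have a4 : γ * (d * h) ≤ (8 * (γ + 3 / 4) ^ 2) * (d * h) := by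
    gcongr
    nlinarith
  nlinarith

lemma exp_Pen0_le {γ σ : ℝ} {m k : ℕ} (π0 : ℕ → ℝ) (hγ : 0 < γ)
    (hπ : 0 < π0 k) (hπ1 : π0 k ≤ 1) (hk : k ≤ m) (L : ℝ)
    (hL : L * (2 * σ ^ 2 * (1 + 1 / γ)) = 1 + 1 / (4 * (1 + γ))) :
    (m.choose k : ℝ) * Real.exp (-(L * Pen0 m σ γ π0 k)) ≤ π0 k := by
  have hC : (1 : ℝ) ≤ m.choose k := by exact_mod_cast Nat.choose_pos hk
  have hC0 : (0 : ℝ) < m.choose k := by linarith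
  have hx : 0 ≤ Real.log ((π0 k)⁻¹ * (m.choose k : ℝ)) :=
    Real.log_nonneg (one_le_mul_of_one_le_of_one_le ((one_le_inv₀ hπ).2 hπ1) hC)
  have hd : 0 < 1 / (4 * (1 + γ)) := by positivity
  have : Real.exp (-(L * Pen0 m σ γ π0 k)) ≤ π0 k / (m.choose k : ℝ) := by
    rw [Pen0, ← mul_assoc, hL]
    calc _ ≤ Real.exp (-Real.log ((π0 k)⁻¹ * (m.choose k : ℝ))) := by
          rw [Real.exp_le_exp]; nlinarith
      _ = _ := by
          rw [Real.exp_neg, Real.exp_log (by positivity)]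
          field_simp
  calc _ ≤ (m.choose k : ℝ) * (π0 k / (m.choose k : ℝ)) := by gcongr
    _ = π0 k := by field_simp

/-! ### The oracle inequality -/

/-- Oracle inequality: up to a factor depending only on `γ`, the risk of a sparse group MAP
estimator is at most the noiseless criterion `mapCrit μ μt` at any fixed comparison point. -/
lemma oracle (γ : ℝ) (hγ : 0 < γ) : ∃ κ : ℝ, 0 < κ ∧
    ∀ (n m : ℕ) (σ : ℝ) (_ : 0 < σ) (π0 : ℕ → ℝ) (πj : Fin m → ℕ → ℝ),
      (∀ k, k ≤ m → 0 < π0 k) →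
      (∑ k ∈ Finset.range (m + 1), π0 k) = 1 →
      (∀ j h, 1 ≤ h → h ≤ n → 0 < πj j h) →
      (∀ j, ∑ h ∈ Finset.Icc 1 n, πj j h = 1) →
      (∀ j h, 1 ≤ h → h ≤ n →
        πj j h ≤ (n.choose h : ℝ) * Real.exp (-(8 * (γ + 3 / 4) ^ 2) * h)) →
      ∀ (est : (Fin m → Fin n → ℝ) → Fin m → Fin n → ℝ),
        IsSparseGroupMAP n m σ γ π0 πj est →
        ∀ μ μt : Fin m → Fin n → ℝ,
          groupRisk n m σ μ est ≤ ENNReal.ofReal (κ * mapCrit n m σ γ π0 πj μ μt) := by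
  have hγ1 : 0 < 1 + γ := by linarith
  -- `l` is the exponential-moment parameter in units of `σ⁻²`; `a < 1` is the fraction of the
  -- loss that is absorbed into the left-hand side.
  set l : ℝ := (1 + 1 / (4 * (1 + γ))) * γ / (2 * (1 + γ)) with hl
  set a : ℝ := (1 + 1 / (4 * (1 + γ))) * (2 + 3 * γ) / (3 * (1 + γ)) with ha
  have hl0 : 0 < l := by positivity
  have ha0 : 0 < a := by positivity
  have ha1 : a < 1 := by
    have e : a = ((5 + 4 * γ) * (2 + 3 * γ)) / (12 * (1 + γ) ^ 2) := by
      rw [ha]; field_simp; ring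
    rw [e, div_lt_one (by positivity)]
    nlinarith
  have hla : 2 * l = a * ((3 * γ / 2) / (1 + 3 * γ / 2)) := by
    rw [hl, ha]; field_simp
  refine ⟨(1 - a)⁻¹, inv_pos.2 (by linarith), ?_⟩
  intro n m σ hσ π0 πj hπ0 hπ0s hπj hπjs hP est hest μ μt
  have hLL : l / σ ^ 2 * (2 * σ ^ 2 * (1 + 1 / γ)) = 1 + 1 / (4 * (1 + γ)) := by
    rw [hl]; field_simp; ring
  set L : ℝ := l / σ ^ 2 with hLdef
  have hL0 : 0 < L := by positivity
  set P : (Fin m → Finset (Fin n)) → ℝ := fun S =>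
    ∑ j, PenJ n σ γ (πj j) (S j).card + Pen0 m σ γ π0 (Finset.univ.filter fun j => S j ≠ ∅).card
    with hPdef
  set G : (Fin m → Finset (Fin n)) → (Fin m → Fin n → ℝ) → ℝ := fun S y =>
    ∏ j, ∏ i, Real.exp (L * coordGain a (μ j i) (i ∈ S j) (y j i)) with hG
  set Z : (Fin m → Fin n → ℝ) → ℝ := fun y => ∑ S, Real.exp (-(L * P S)) * G S y with hZ
  have hGI := fun S => config_exp hσ (by positivity : 0 < 3 * γ / 2) ha0 hla μ S
  have hZint : Integrable Z (gaussianData n m σ μ) :=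
    integrable_finsetSum _ fun S _ => (hGI S).1.const_mul _
  have hπ01 : ∀ k ≤ m, π0 k ≤ 1 := by
    intro k hk
    rw [← hπ0s]
    exact Finset.single_le_sum (f := π0)
      (fun i hi => (hπ0 i (by simpa [Nat.lt_succ_iff] using hi)).le)
      (by simpa [Nat.lt_succ_iff] using hk)
  have hZle : ∫ y, Z y ∂(gaussianData n m σ μ) ≤ 1 := by
    simp only [hZ]
    rw [integral_finsetSum _ fun S _ => (hGI S).1.const_mul _]
    set q : Fin m → Finset (Fin n) → ℝ := fun j T =>
      if T = ∅ then 1 else πj j T.card / (n.choose T.card : ℝ) with hq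
    have hcard : ∀ T : Finset (Fin n), T.card ≤ n := fun T => by simpa using Finset.card_le_univ T
    calc _ ≤ ∑ S : Fin m → Finset (Fin n),
          Real.exp (-(L * Pen0 m σ γ π0 (Finset.univ.filter fun j => S j ≠ ∅).card))
            * ∏ j, q j (S j) := by
          refine Finset.sum_le_sum fun S _ => ?_
          rw [integral_const_mul]
          calc _ ≤ Real.exp (-(L * P S)) * ∏ j, √(1 + 3 * γ / 2) ^ (S j).card := by
                gcongr
                exact (hGI S).2
            _ = Real.exp (-(L * Pen0 m σ γ π0 (Finset.univ.filter fun j => S j ≠ ∅).card)) *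
                ∏ j, (Real.exp (-(L * PenJ n σ γ (πj j) (S j).card)) *
                  √(1 + 3 * γ / 2) ^ (S j).card) := by
                rw [Finset.prod_mul_distrib, ← Real.exp_sum, ← mul_assoc, ← Real.exp_add]
                congr 2
                simp only [hPdef, Finset.sum_neg_distrib, ← Finset.mul_sum]
                ring
            _ ≤ _ := by
                gcongr with j
                by_cases h : S j = ∅
                · simp [hq, h, PenJ]
                · have h1 : 1 ≤ (S j).card := Finset.card_pos.2 (Finset.nonempty_iff_ne_empty.2 h)
                  simp only [hq, h, if_false]
                  exact exp_PenJ_le hγ _ (hπj j _ h1 (hcard _)) h1 (hcard _)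
                    (hP j _ h1 (hcard _)) L hLL
      _ ≤ ∑ k ∈ Finset.range (m + 1), (m.choose k : ℝ) * Real.exp (-(L * Pen0 m σ γ π0 k)) := by
          refine sum_config_le (fun k => Real.exp (-(L * Pen0 m σ γ π0 k)))
            (fun k _ => (Real.exp_pos _).le) q ?_ (fun j => by simp [hq]) ?_
          · intro j T
            simp only [hq]
            split_ifs with h
            · norm_num
            · exact div_nonneg (hπj j _ (Finset.card_pos.2 (Finset.nonempty_iff_ne_empty.2 h))
                (hcard _)).le (by positivity)
          · intro j
            rw [← sum_support_weights (πj j) (hπjs j)]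
            refine (Finset.sum_congr rfl fun T hT => ?_).le
            simp [hq, (Finset.mem_erase.1 hT).1]
      _ ≤ ∑ k ∈ Finset.range (m + 1), π0 k := by
          refine Finset.sum_le_sum fun k hk => ?_
          have hk' : k ≤ m := by simpa [Nat.lt_succ_iff] using hk
          exact exp_Pen0_le π0 hγ (hπ0 k hk') (hπ01 k hk') hk' L hLL
      _ = 1 := hπ0s
  obtain ⟨hNint, hN0⟩ := integral_noise σ μ (fun j i => μt j i - μ j i)
  set N : (Fin m → Fin n → ℝ) → ℝ := fun y => ∑ j, ∑ i, (y j i - μ j i) * (μt j i - μ j i)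
    with hN
  have hpt : ∀ y, ∑ j, ∑ i, (est y j i - μ j i) ^ 2
      ≤ (1 - a)⁻¹ * (mapCrit n m σ γ π0 πj μ μt - 2 * N y + L⁻¹ * (Z y - 1)) := by
    intro y
    set S : Fin m → Finset (Fin n) := fun j => Finset.univ.filter fun i => est y j i ≠ 0 with hS
    set g : ℝ := ∑ j, ∑ i, coordGain a (μ j i) (i ∈ S j) (y j i) with hg
    have hgl : 2 * (∑ j, ∑ i, (y j i - μ j i) * (est y j i - μ j i))
        - a * ∑ j, ∑ i, (est y j i - μ j i) ^ 2 ≤ g := by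
      simp only [hg, Finset.mul_sum, ← Finset.sum_sub_distrib]
      refine Finset.sum_le_sum fun j _ => Finset.sum_le_sum fun i _ => ?_
      have := le_coordGain ha0 (μ j i) (y j i) (est y j i) (i ∈ S j) (by simp [hS])
      linarith
    have hZg : L * (g - P S) + 1 ≤ Z y := by
      calc _ ≤ Real.exp (L * (g - P S)) := Real.add_one_le_exp _
        _ = Real.exp (-(L * P S)) * G S y := by
            simp only [hG, ← Real.exp_sum, ← Real.exp_add, hg, ← Finset.mul_sum]
            congr 1
            ring
        _ ≤ Z y := Finset.single_le_sum
            (f := fun S => Real.exp (-(L * P S)) * G S y)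
            (fun S _ => by simp only [hG]; positivity) (Finset.mem_univ S)
    have hgP : g - P S ≤ L⁻¹ * (Z y - 1) := by
      rw [le_inv_mul_iff₀ hL0]; linarith
    have hSne : ∀ j, est y j ≠ 0 ↔ S j ≠ ∅ := by
      intro j
      simp [hS, Finset.filter_eq_empty_iff, funext_iff]
    have hcrit := hest.2 y μt
    have hPe : mapCrit n m σ γ π0 πj y (est y)
        = (∑ j, ∑ i, (y j i - est y j i) ^ 2) + P S := by
      simp only [mapCrit, hSne, Finset.sum_add_distrib, hPdef, l0norm, hS]
      ring
    rw [hPe] at hcrit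
    have ex : ∀ u : Fin m → Fin n → ℝ, ∑ j, ∑ i, (y j i - u j i) ^ 2
        = (∑ j, ∑ i, (y j i - μ j i) ^ 2)
          - 2 * (∑ j, ∑ i, (y j i - μ j i) * (u j i - μ j i))
          + ∑ j, ∑ i, (u j i - μ j i) ^ 2 := by
      intro u
      simp only [Finset.mul_sum, ← Finset.sum_sub_distrib, ← Finset.sum_add_distrib]
      refine Finset.sum_congr rfl fun j _ => Finset.sum_congr rfl fun i _ => ?_
      ring
    have hm1 : mapCrit n m σ γ π0 πj y μt = mapCrit n m σ γ π0 πj μ μt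
        + (∑ j, ∑ i, (y j i - μ j i) ^ 2) - 2 * N y := by
      simp only [mapCrit, Finset.sum_add_distrib]
      have e2 : ∑ j, ∑ i, (μ j i - μt j i) ^ 2 = ∑ j, ∑ i, (μt j i - μ j i) ^ 2 :=
        Finset.sum_congr rfl fun j _ => Finset.sum_congr rfl fun i _ => by ring
      rw [ex μt, e2]
      ring
    rw [hm1, ex (est y)] at hcrit
    rw [le_inv_mul_iff₀ (by linarith)]
    linarith
  have hint : Integrable (fun y => (1 - a)⁻¹ *
      (mapCrit n m σ γ π0 πj μ μt - 2 * N y + L⁻¹ * (Z y - 1))) (gaussianData n m σ μ) :=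
    ((((integrable_const _).sub (hNint.const_mul 2)).add
      ((hZint.sub (integrable_const _)).const_mul _))).const_mul _
  have hpos : ∀ y, 0 ≤ ∑ j, ∑ i, (est y j i - μ j i) ^ 2 := fun y =>
    Finset.sum_nonneg fun j _ => Finset.sum_nonneg fun i _ => sq_nonneg _
  unfold groupRisk
  calc _ ≤ ∫⁻ y, ENNReal.ofReal ((1 - a)⁻¹ *
      (mapCrit n m σ γ π0 πj μ μt - 2 * N y + L⁻¹ * (Z y - 1))) ∂(gaussianData n m σ μ) :=
        lintegral_mono fun y => ENNReal.ofReal_le_ofReal (hpt y)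
    _ = ENNReal.ofReal (∫ y, (1 - a)⁻¹ *
      (mapCrit n m σ γ π0 πj μ μt - 2 * N y + L⁻¹ * (Z y - 1)) ∂(gaussianData n m σ μ)) :=
        (ofReal_integral_eq_lintegral_ofReal hint
          (ae_of_all _ fun y => (hpos y).trans (hpt y))).symm
    _ ≤ _ := by
        refine ENNReal.ofReal_le_ofReal ?_
        have i1 : Integrable (fun y => mapCrit n m σ γ π0 πj μ μt - 2 * N y)
            (gaussianData n m σ μ) := (integrable_const _).sub (hNint.const_mul 2)
        have i2 : Integrable (fun y => L⁻¹ * (Z y - 1)) (gaussianData n m σ μ) :=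
          (hZint.sub (integrable_const _)).const_mul _
        rw [integral_const_mul, integral_add i1 i2,
          integral_sub (integrable_const _) (hNint.const_mul 2), integral_const_mul,
          integral_const_mul, integral_sub hZint (integrable_const _), hN0]
        simp only [integral_const, probReal_univ, smul_eq_mul, one_mul, mul_zero, sub_zero]
        have h1a : 0 ≤ (1 - a)⁻¹ := (inv_pos.2 (by linarith)).le
        refine mul_le_mul_of_nonneg_left ?_ h1a
        have : L⁻¹ * ((∫ y, Z y ∂(gaussianData n m σ μ)) - 1) ≤ 0 :=
          mul_nonpos_of_nonneg_of_nonpos (inv_pos.2 hL0).le (by linarith)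
        linarith

/-! ### Approximation error and penalties of the comparison point -/

lemma sum_rpow_neg_le {s : ℝ} (hs0 : 0 < s) (hs1 : s < 1) (N : ℕ) :
    ∑ i ∈ Finset.range N, ((i : ℝ) + 1) ^ (-s) ≤ (N : ℝ) ^ (1 - s) / (1 - s) := by
  have h1s : 0 < 1 - s := by linarith
  induction N with
  | zero => simp [Real.zero_rpow h1s.ne']
  | succ N ih =>
    rw [Finset.sum_range_succ]
    refine (add_le_add_left ih _).trans ?_
    push_cast
    have hN : (0 : ℝ) < N + 1 := by positivity
    -- Bernoulli's inequality gives `N^(1-s) ≤ (N+1)^(1-s) - (1-s) (N+1)^(-s)`.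
    have hB := rpow_one_add_le_one_add_mul_self (s := -1 / ((N : ℝ) + 1))
      (by rw [le_div_iff₀ hN]; linarith [(Nat.cast_nonneg N : (0 : ℝ) ≤ N)]) h1s.le
      (by linarith : 1 - s ≤ 1)
    have e1 : 1 + -1 / ((N : ℝ) + 1) = N / (N + 1) := by field_simp; ring
    rw [e1, Real.div_rpow (by positivity) hN.le, div_le_iff₀ (by positivity)] at hB
    have e2 : ((N : ℝ) + 1) ^ (1 - s) = (N + 1) * ((N : ℝ) + 1) ^ (-s) := by
      rw [sub_eq_add_neg, Real.rpow_add hN, Real.rpow_one]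
    have e3 : (1 + (1 - s) * (-1 / ((N : ℝ) + 1))) * ((N : ℝ) + 1) ^ (1 - s)
        = ((N : ℝ) + 1) ^ (1 - s) - (1 - s) * ((N : ℝ) + 1) ^ (-s) := by
      rw [e2]; field_simp; ring
    rw [e3] at hB
    rw [le_div_iff₀ h1s, add_mul, div_mul_cancel₀ _ h1s.ne']
    linarith

/-- For `p > 2` the whole weak `l_p`-ball has squared norm of order `σ² η² n`, so the zero
vector already attains the target approximation error. -/
lemma weakLp_sq_le {n : ℕ} {σ p pbar η : ℝ} (hpbar : 2 < pbar) (hp : pbar ≤ p)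
    (hσ : 0 < σ) (hη : 0 ≤ η) (v : Fin n → ℝ) (hv : memWeakLp σ p η v) :
    ∑ i, v i ^ 2 ≤ (1 - 2 / pbar)⁻¹ * (σ ^ 2 * n * η ^ 2) := by
  rcases Nat.eq_zero_or_pos n with rfl | hn
  · simp
  have hs0 : 0 < 2 / pbar := by positivity
  have hs1 : 2 / pbar < 1 := by rw [div_lt_one (by linarith)]; exact hpbar
  have hn0 : (0 : ℝ) < n := by exact_mod_cast hn
  have h1 : ∑ i, v i ^ 2 = ∑ i, ordAbs v i ^ 2 := by
    rw [← Equiv.sum_comp (Tuple.sort fun j => -|v j|)]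
    exact Finset.sum_congr rfl fun i _ => by simp [ordAbs]
  have h2 : ∀ i : Fin n, ordAbs v i ^ 2
      ≤ σ ^ 2 * η ^ 2 * ((n : ℝ) ^ (2 / pbar) * (((i : ℕ) : ℝ) + 1) ^ (-(2 / pbar))) := by
    intro i
    have hi : (0 : ℝ) < ((i : ℕ) : ℝ) + 1 := by positivity
    have hr : (1 : ℝ) ≤ (n : ℝ) / ((i : ℕ) + 1) := by
      rw [one_le_div hi]; exact_mod_cast i.2
    have h0 : 0 ≤ ordAbs v i := abs_nonneg _
    calc ordAbs v i ^ 2 ≤ (σ * η * ((n : ℝ) / ((i : ℕ) + 1)) ^ (1 / pbar)) ^ 2 := by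
          gcongr
          refine (hv i).trans ?_
          gcongr
      _ = σ ^ 2 * η ^ 2 * ((n : ℝ) / ((i : ℕ) + 1)) ^ (2 / pbar) := by
          rw [mul_pow, mul_pow, ← Real.rpow_natCast (_ ^ (1 / pbar)),
            ← Real.rpow_mul (by positivity)]
          congr 2
          push_cast
          ring
      _ = _ := by
          rw [Real.div_rpow hn0.le hi.le, Real.rpow_neg hi.le, div_eq_mul_inv]
  rw [h1]
  calc _ ≤ ∑ i : Fin n, σ ^ 2 * η ^ 2 *
        ((n : ℝ) ^ (2 / pbar) * (((i : ℕ) : ℝ) + 1) ^ (-(2 / pbar))) :=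
        Finset.sum_le_sum fun i _ => h2 i
    _ = σ ^ 2 * η ^ 2 * ((n : ℝ) ^ (2 / pbar) *
        ∑ i ∈ Finset.range n, ((i : ℝ) + 1) ^ (-(2 / pbar))) := by
        rw [← Finset.mul_sum, ← Finset.mul_sum,
          Fin.sum_univ_eq_sum_range (fun i => ((i : ℝ) + 1) ^ (-(2 / pbar)))]
    _ ≤ σ ^ 2 * η ^ 2 * ((n : ℝ) ^ (2 / pbar) *
        ((n : ℝ) ^ (1 - 2 / pbar) / (1 - 2 / pbar))) := by
        gcongr
        exact sum_rpow_neg_le hs0 hs1 n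
    _ = _ := by
        rw [← mul_div_assoc, ← Real.rpow_add hn0]
        have : 2 / pbar + (1 - 2 / pbar) = 1 := by ring
        rw [this, Real.rpow_one]
        ring

lemma half_le_log {n : ℕ} (hn : 2 ≤ n) : 1 / 2 ≤ Real.log n := by
  have h2 : Real.log 2 ≤ Real.log n := Real.log_le_log (by norm_num) (by exact_mod_cast hn)
  have := Real.log_two_gt_d9
  linarith

/-- Some nonempty support size has within-group penalty `O(σ² ln n)`: size one when the prior
condition covers it, and size `n` when `n < exp c(γ)`. -/
lemma exists_PenJ_le {γ σ c c₁ c₂ : ℝ} (hγ : 0 < γ) (hσ : 0 < σ) (hc₁ : 0 < c₁)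
    (hc₂ : 0 < c₂) {n : ℕ} (hn : 2 ≤ n) (π : ℕ → ℝ)
    (h1 : ∀ h : ℕ, 1 ≤ h → (h : ℝ) ≤ (n : ℝ) * Real.exp (-c) →
      ((h : ℝ) / n) ^ (c₁ * (h : ℝ)) ≤ π h)
    (h2 : Real.exp (-(c₂ * n)) ≤ π n) :
    ∃ h, 1 ≤ h ∧ h ≤ n ∧ PenJ n σ γ π h ≤ 2 * (1 + 1 / γ) *
      (c₁ + 1 + Real.log (1 + γ) + 2 * Real.exp c * (c₂ + Real.log (1 + γ))) *
        (σ ^ 2 * Real.log n) := by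
  have hl := half_le_log hn
  have hn0 : (0 : ℝ) < n := by positivity
  have hlg : 0 ≤ Real.log (1 + γ) := Real.log_nonneg (by linarith)
  -- both cases reduce to a bound on the logarithm of the weight
  have red : ∀ h : ℕ, 1 ≤ h → h ≤ n → 0 < π h →
      -Real.log (π h) + Real.log (n.choose h) + h / 2 * Real.log (1 + γ)
        ≤ (c₁ + 1 + Real.log (1 + γ) + 2 * Real.exp c * (c₂ + Real.log (1 + γ))) * Real.log n →
      PenJ n σ γ π h ≤ 2 * (1 + 1 / γ) *
      (c₁ + 1 + Real.log (1 + γ) + 2 * Real.exp c * (c₂ + Real.log (1 + γ))) *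
        (σ ^ 2 * Real.log n) := by
    intro h hh1 hhn hπ hle
    have hC : (0 : ℝ) < n.choose h := by exact_mod_cast Nat.choose_pos hhn
    rw [PenJ, if_neg (by omega), Real.log_mul (by positivity) (by positivity),
      Real.log_mul (by positivity) (by positivity), Real.log_inv, Real.log_rpow (by positivity)]
    calc _ ≤ 2 * σ ^ 2 * (1 + 1 / γ) * ((c₁ + 1 + Real.log (1 + γ) +
          2 * Real.exp c * (c₂ + Real.log (1 + γ))) * Real.log n) := by gcongr
      _ = _ := by ring
  by_cases hc : 1 ≤ (n : ℝ) * Real.exp (-c)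
  · have hp := h1 1 le_rfl (by simpa using hc)
    have hpow : (0 : ℝ) < (((1 : ℕ) : ℝ) / n) ^ (c₁ * ((1 : ℕ) : ℝ)) := by positivity
    refine ⟨1, le_rfl, by omega, red 1 le_rfl (by omega) (hpow.trans_le hp) ?_⟩
    have hlog := Real.log_le_log hpow hp
    rw [Real.log_rpow (by positivity), Real.log_div (by norm_num) hn0.ne'] at hlog
    simp only [Nat.cast_one, Real.log_one, mul_one, zero_sub] at hlog
    rw [Nat.choose_one_right, Nat.cast_one]
    have a1 : 1 / 2 * Real.log (1 + γ) ≤ Real.log n * Real.log (1 + γ) := by gcongr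
    have a2 : 0 ≤ 2 * Real.exp c * (c₂ + Real.log (1 + γ)) * Real.log n := by positivity
    nlinarith
  · push Not at hc
    rw [Real.exp_neg, mul_inv_lt_iff₀ (Real.exp_pos c), one_mul] at hc
    refine ⟨n, by omega, le_rfl, red n (by omega) le_rfl ((Real.exp_pos _).trans_le h2) ?_⟩
    have hlog := (Real.le_log_iff_exp_le ((Real.exp_pos _).trans_le h2)).2 h2
    rw [Nat.choose_self, Nat.cast_one, Real.log_one]
    have a1 : (n : ℝ) * (c₂ + Real.log (1 + γ)) ≤ Real.exp c * (c₂ + Real.log (1 + γ)) := by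
      gcongr
    have a2 : 0 ≤ (c₁ + 1 + Real.log (1 + γ)) * Real.log n := by positivity
    have a3 : Real.exp c * (c₂ + Real.log (1 + γ)) * (1 / 2)
        ≤ Real.exp c * (c₂ + Real.log (1 + γ)) * Real.log n := by gcongr
    have a4 : 0 ≤ (n : ℝ) / 2 * Real.log (1 + γ) := by positivity
    nlinarith

lemma log_choose_le_s3 {m k : ℕ} (hk : 1 ≤ k) (hkm : k ≤ m) :
    Real.log (m.choose k) ≤ k * (1 + Real.log ((m : ℝ) / k)) := by
  have hC : (0 : ℝ) < m.choose k := by exact_mod_cast Nat.choose_pos hkm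
  have hk0 : (0 : ℝ) < k := by exact_mod_cast hk
  have hm0 : (0 : ℝ) < m := by exact_mod_cast (by omega : 0 < m)
  have h1 : (m.choose k : ℝ) ≤ (m : ℝ) ^ k / k.factorial := Nat.choose_le_pow_div k m
  have h2 : (k : ℝ) ^ k / k.factorial ≤ Real.exp k := Real.pow_div_factorial_le_exp _ hk0.le k
  have h3 : (m.choose k : ℝ) ≤ ((m : ℝ) / k) ^ k * Real.exp k := by
    calc _ ≤ (m : ℝ) ^ k / k.factorial := h1
      _ = ((m : ℝ) / k) ^ k * ((k : ℝ) ^ k / k.factorial) := by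
          rw [div_pow]; field_simp
      _ ≤ _ := by gcongr
  have := Real.log_le_log hC h3
  rw [Real.log_mul (by positivity) (by positivity), Real.log_exp, Real.log_pow] at this
  linarith

/-- A set `K ⊇ J` of groups, at most three times as large, whose between-group penalty is of the
target order: `K = J` if `|J| ≤ m / e`, and all groups otherwise. -/
lemma exists_Pen0_le {γ σ c₀ : ℝ} (hγ : 0 < γ) (hσ : 0 < σ) (hc₀ : 0 < c₀) {m : ℕ}
    (π0 : ℕ → ℝ)
    (h1 : ∀ k : ℕ, 1 ≤ k → (k : ℝ) ≤ (m : ℝ) / Real.exp 1 →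
      ((k : ℝ) / m) ^ (c₀ * (k : ℝ)) ≤ π0 k)
    (h2 : Real.exp (-(c₀ * m)) ≤ π0 m) (J : Finset (Fin m)) (hJ : J.Nonempty) :
    ∃ K : Finset (Fin m), J ⊆ K ∧ (K.card : ℝ) ≤ 3 * J.card ∧
      Pen0 m σ γ π0 K.card ≤ 2 * (1 + 1 / γ) *
        ((c₀ + 2) * (σ ^ 2 * J.card * Real.log ((m : ℝ) / J.card))
          + 3 * c₀ * (σ ^ 2 * J.card)) := by
  have hk1 : 1 ≤ J.card := Finset.card_pos.2 hJ
  have hkm : J.card ≤ m := by simpa using Finset.card_le_univ J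
  have hk0 : (0 : ℝ) < J.card := by exact_mod_cast hk1
  have hm0 : (0 : ℝ) < m := by exact_mod_cast (by omega : 0 < m)
  have hlog0 : 0 ≤ Real.log ((m : ℝ) / J.card) :=
    Real.log_nonneg (by rw [one_le_div hk0]; exact_mod_cast hkm)
  by_cases hc : (J.card : ℝ) ≤ (m : ℝ) / Real.exp 1
  · refine ⟨J, subset_rfl, by linarith, ?_⟩
    have hp := h1 _ hk1 hc
    have hpow : (0 : ℝ) < ((J.card : ℝ) / m) ^ (c₀ * (J.card : ℝ)) := by positivity
    have hlog := Real.log_le_log hpow hp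
    rw [Real.log_rpow (by positivity), ← inv_div, Real.log_inv] at hlog
    have hl1 : 1 ≤ Real.log ((m : ℝ) / J.card) := by
      rw [Real.le_log_iff_exp_le (by positivity), le_div_iff₀ hk0]
      rw [le_div_iff₀ (Real.exp_pos 1)] at hc
      linarith
    have hch := log_choose_le_s3 hk1 hkm
    have hC : (0 : ℝ) < m.choose J.card := by exact_mod_cast Nat.choose_pos hkm
    have hπ := hpow.trans_le hp
    rw [Pen0, Real.log_mul (by positivity) (by positivity), Real.log_inv]
    have hk' : (J.card : ℝ) * 1 ≤ J.card * Real.log ((m : ℝ) / J.card) := by gcongr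
    have key : -Real.log (π0 J.card) + Real.log (m.choose J.card)
        ≤ (c₀ + 2) * (J.card * Real.log ((m : ℝ) / J.card)) := by linarith
    calc _ ≤ 2 * σ ^ 2 * (1 + 1 / γ) * ((c₀ + 2) * (J.card * Real.log ((m : ℝ) / J.card))) := by
          gcongr
      _ ≤ 2 * σ ^ 2 * (1 + 1 / γ) * ((c₀ + 2) * (J.card * Real.log ((m : ℝ) / J.card)))
          + 2 * (1 + 1 / γ) * (3 * c₀ * (σ ^ 2 * J.card)) :=
          le_add_of_nonneg_right (by positivity)
      _ = _ := by ring
  · push Not at hc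
    rw [div_lt_iff₀ (Real.exp_pos 1)] at hc
    have hm3 : (m : ℝ) ≤ 3 * J.card := by
      have := Real.exp_one_lt_d9
      nlinarith
    refine ⟨Finset.univ, Finset.subset_univ _, by simpa using hm3, ?_⟩
    have hπ := (Real.exp_pos _).trans_le h2
    have hlog := (Real.le_log_iff_exp_le hπ).2 h2
    rw [Finset.card_univ, Fintype.card_fin, Pen0, Nat.choose_self, Nat.cast_one, mul_one,
      Real.log_inv]
    have key : -Real.log (π0 m) ≤ c₀ * (3 * J.card) := by nlinarith
    calc _ ≤ 2 * σ ^ 2 * (1 + 1 / γ) * (c₀ * (3 * J.card)) := by gcongr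
      _ ≤ 2 * σ ^ 2 * (1 + 1 / γ) * (c₀ * (3 * J.card)) + 2 * (1 + 1 / γ) *
        ((c₀ + 2) * (σ ^ 2 * J.card * Real.log ((m : ℝ) / J.card))) :=
          le_add_of_nonneg_right (by positivity)
      _ = _ := by ring

/-! ### The risk bound -/

/-- upper bound over weak `l_p`-balls, `p > 2`. -/
theorem stmt3 (γ c₀ c₁' c₂' pbar : ℝ) (hγ : 0 < γ) (hc₀ : 0 < c₀) (hc₁ : 0 < c₁')
    (hc₂ : 8 * (γ + 3 / 4) ^ 2 < c₂') (hpbar : 2 < pbar) :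
    ∃ C : ℝ, 0 < C ∧
      ∀ (n m : ℕ) (hn : 2 ≤ n) (hm : 1 ≤ m) (σ : ℝ) (hσ : 0 < σ)
        (π0 : ℕ → ℝ) (πj : Fin m → ℕ → ℝ),
        (∀ k, k ≤ m → 0 < π0 k) →
        (∑ k ∈ Finset.range (m + 1), π0 k) = 1 →
        (∀ j h, 1 ≤ h → h ≤ n → 0 < πj j h) →
        (∀ j, ∑ h ∈ Finset.Icc 1 n, πj j h = 1) →
        -- Assumption (P)
        (∀ j h, 1 ≤ h → h ≤ n →
          πj j h ≤ (n.choose h : ℝ) * Real.exp (-(8 * (γ + 3 / 4) ^ 2) * h)) →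
        -- prior conditions on π₀
        (∀ k : ℕ, 1 ≤ k → (k : ℝ) ≤ (m : ℝ) / Real.exp 1 →
          ((k : ℝ) / m) ^ (c₀ * (k : ℝ)) ≤ π0 k) →
        Real.exp (-(c₀ * m)) ≤ π0 m →
        -- prior conditions on π_j
        (∀ j, ∀ h : ℕ, 1 ≤ h → (h : ℝ) ≤ (n : ℝ) * Real.exp (-(8 * (γ + 3 / 4) ^ 2)) →
          ((h : ℝ) / n) ^ (c₁' * (h : ℝ)) ≤ πj j h) →
        (∀ j, Real.exp (-(c₂' * n)) ≤ πj j n) →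
        ∀ (J0c : Finset (Fin m)), J0c.Nonempty →
        ∀ (p η : Fin m → ℝ),
          (∀ j ∈ J0c, pbar ≤ p j) →
          (∀ j ∈ J0c, Real.sqrt (Real.log n / n) ≤ η j ∧ η j ≤ 1) →
        ∀ (est : (Fin m → Fin n → ℝ) → Fin m → Fin n → ℝ),
          IsSparseGroupMAP n m σ γ π0 πj est →
          ∀ μ : Fin m → Fin n → ℝ,
            (∀ j ∉ J0c, μ j = 0) →
            (∀ j ∈ J0c, memWeakLp σ (p j) (η j) (μ j)) →
            groupRisk n m σ μ est ≤
              ENNReal.ofReal (C * max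
                (∑ j ∈ J0c, σ ^ 2 * n * η j ^ 2)
                (σ ^ 2 * J0c.card * Real.log ((m : ℝ) / J0c.card))) := by
  obtain ⟨κ, hκ, horacle⟩ := oracle γ hγ
  set B : ℝ := 2 * (1 + 1 / γ) * (c₁' + 1 + Real.log (1 + γ) +
    2 * Real.exp (8 * (γ + 3 / 4) ^ 2) * (c₂' + Real.log (1 + γ))) with hB
  set D : ℝ := (1 - 2 / pbar)⁻¹ with hD
  have hc₂0 : 0 < c₂' := lt_of_le_of_lt (by positivity) hc₂
  have hlg : 0 ≤ Real.log (1 + γ) := Real.log_nonneg (by linarith)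
  have hB0 : 0 < B := by positivity
  have hD0 : 0 < D := by
    rw [hD, inv_pos, sub_pos, div_lt_one (by linarith)]
    exact hpbar
  refine ⟨κ * (2 * D + 3 * (4 + B) + 2 * (1 + 1 / γ) * (c₀ + 2) + 2 * (1 + 1 / γ) * (6 * c₀)),
    by positivity, ?_⟩
  intro n m hn hm σ hσ π0 πj hπ0 hπ0s hπj hπjs hP hpr0 hpr0m hprj hprjn J hJ p η hp hη est hest
    μ hμ0 hμ
  have hn0 : (0 : ℝ) < n := by positivity
  have hln := half_le_log hn
  obtain ⟨K, hJK, hKcard, hKpen⟩ := exists_Pen0_le hγ hσ hc₀ π0 hpr0 hpr0m J hJ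
  choose h hh1 hhn hhpen using fun j =>
    exists_PenJ_le hγ hσ hc₁ hc₂0 hn (πj j) (hprj j) (hprjn j)
  have hT : ∀ j, ∃ T : Finset (Fin n), T.card = h j := fun j => by
    obtain ⟨T, -, hT⟩ := Finset.exists_subset_card_eq (s := (Finset.univ : Finset (Fin n)))
      (n := h j) (by simpa using hhn j)
    exact ⟨T, hT⟩
  choose T hT using hT
  -- The comparison point has prescribed support sizes in the groups of `K`; its nonzero entries
  -- are small enough to cost at most `σ²` per group.
  set r : ℝ := σ / √n with hr
  have hr0 : r ≠ 0 := by positivity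
  have hr2 : (n : ℝ) * r ^ 2 = σ ^ 2 := by
    rw [hr, div_pow, Real.sq_sqrt hn0.le]
    field_simp
  set μt : Fin m → Fin n → ℝ := fun j i => if j ∈ K ∧ i ∈ T j then r else 0 with hμt
  have hl0 : ∀ j, l0norm (μt j) = if j ∈ K then h j else 0 := by
    intro j
    by_cases hj : j ∈ K
    · simp [l0norm, hμt, hj, hr0, hT]
    · simp [l0norm, hμt, hj]
  have hgroups : (Finset.univ.filter fun j => μt j ≠ 0) = K := by
    ext j
    simp only [Finset.mem_filter, Finset.mem_univ, true_and]
    have : μt j ≠ 0 ↔ l0norm (μt j) ≠ 0 := by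
      simp [l0norm, Finset.filter_eq_empty_iff, funext_iff]
    rw [this, hl0]
    have := hh1 j
    by_cases hj : j ∈ K <;> simp [hj]
    omega
  set R : ℝ := ∑ j ∈ J, σ ^ 2 * n * η j ^ 2 with hR
  set Q : ℝ := σ ^ 2 * J.card * Real.log ((m : ℝ) / J.card) with hQ
  have hη2 : ∀ j ∈ J, 0 ≤ η j ∧ Real.log n ≤ n * η j ^ 2 := by
    intro j hj
    have h1 := (hη j hj).1
    have h0 : 0 ≤ η j := (Real.sqrt_nonneg _).trans h1
    refine ⟨h0, ?_⟩
    rw [Real.sqrt_le_left h0, div_le_iff₀ hn0] at h1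
    linarith
  have hRlog : (J.card : ℝ) * (σ ^ 2 * Real.log n) ≤ R := by
    rw [hR, ← nsmul_eq_mul]
    refine Finset.card_nsmul_le_sum _ _ _ fun j hj => ?_
    rw [mul_assoc]
    exact mul_le_mul_of_nonneg_left (hη2 j hj).2 (by positivity)
  have hnorm : ∑ j, ∑ i, μ j i ^ 2 ≤ D * R := by
    have e : ∑ j, ∑ i, μ j i ^ 2 = ∑ j ∈ J, ∑ i, μ j i ^ 2 := by
      symm
      refine Finset.sum_subset (Finset.subset_univ _) fun j _ hj => ?_
      simp [hμ0 j hj]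
    rw [e, hR, Finset.mul_sum]
    exact Finset.sum_le_sum fun j hj =>
      weakLp_sq_le hpbar (hp j hj) hσ (hη2 j hj).1 (μ j) (hμ j hj)
  have hgroup : ∀ j, (∑ i, (μ j i - μt j i) ^ 2) + PenJ n σ γ (πj j) (l0norm (μt j))
      ≤ 2 * (∑ i, μ j i ^ 2) + if j ∈ K then (4 + B) * (σ ^ 2 * Real.log n) else 0 := by
    intro j
    rw [hl0]
    by_cases hj : j ∈ K
    · rw [if_pos hj, if_pos hj]
      have h1 : ∑ i, (μ j i - μt j i) ^ 2 ≤ ∑ i, (2 * μ j i ^ 2 + 2 * r ^ 2) := by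
        refine Finset.sum_le_sum fun i _ => ?_
        have : μt j i ^ 2 ≤ r ^ 2 := by
          simp only [hμt]
          split_ifs
          · exact le_rfl
          · simpa using sq_nonneg r
        nlinarith [sq_nonneg (μ j i + μt j i)]
      rw [Finset.sum_add_distrib, ← Finset.mul_sum, Finset.sum_const, Finset.card_univ,
        Fintype.card_fin, nsmul_eq_mul] at h1
      have h2 := hhpen j
      rw [← hB] at h2
      have h3 : σ ^ 2 * (1 / 2) ≤ σ ^ 2 * Real.log n := by gcongr
      linarith
    · have : ∀ i, μt j i = 0 := fun i => by simp [hμt, hj]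
      simp only [this, hj, if_false, PenJ, if_true, sub_zero, add_zero]
      have : 0 ≤ ∑ i, μ j i ^ 2 := Finset.sum_nonneg fun i _ => sq_nonneg _
      linarith
  have hcrit : mapCrit n m σ γ π0 πj μ μt
      ≤ 2 * (D * R) + K.card * ((4 + B) * (σ ^ 2 * Real.log n)) +
        2 * (1 + 1 / γ) * ((c₀ + 2) * Q + 3 * c₀ * (σ ^ 2 * J.card)) := by
    rw [mapCrit, hgroups]
    refine add_le_add ((Finset.sum_le_sum fun j _ => hgroup j).trans ?_) hKpen
    rw [Finset.sum_add_distrib, ← Finset.mul_sum, Finset.sum_ite_mem, Finset.univ_inter,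
      Finset.sum_const, nsmul_eq_mul]
    linarith
  refine (horacle n m σ hσ π0 πj hπ0 hπ0s hπj hπjs hP est hest μ μt).trans
    (ENNReal.ofReal_le_ofReal ?_)
  rw [mul_assoc]
  refine mul_le_mul_of_nonneg_left (hcrit.trans ?_) hκ.le
  set M := max R Q with hM
  have hRM : R ≤ M := le_max_left _ _
  have hQM : Q ≤ M := le_max_right _ _
  have hK3 : (K.card : ℝ) * ((4 + B) * (σ ^ 2 * Real.log n)) ≤ 3 * (4 + B) * M := by
    calc _ ≤ 3 * J.card * ((4 + B) * (σ ^ 2 * Real.log n)) := by gcongr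
      _ = 3 * (4 + B) * (J.card * (σ ^ 2 * Real.log n)) := by ring
      _ ≤ 3 * (4 + B) * M := by
          gcongr
          exact hRlog.trans hRM
  have hJM : σ ^ 2 * J.card ≤ 2 * M := by
    have : (J.card : ℝ) * (σ ^ 2 * (1 / 2)) ≤ J.card * (σ ^ 2 * Real.log n) := by gcongr
    linarith
  calc _ ≤ 2 * (D * M) + 3 * (4 + B) * M +
        2 * (1 + 1 / γ) * ((c₀ + 2) * M + 3 * c₀ * (2 * M)) := by gcongr
    _ = _ := by ring
end
end

section
/- Let y ∈ ℝⁿ and λ > 0. The unique minimizer over μ ∈ ℝⁿ of ‖y − μ‖₂² + λ‖μ‖₂ is μ̂ = (1 − (λ/2)/‖y‖₂)₊ · y when y ≠ 0, and μ̂ = 0 when y = 0, where (x)₊ = max(x, 0). -/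
/-!
The criterion is strongly convex, so a point `m` satisfying the first-order optimality condition
`2 (y - m) ∈ λ ∂‖·‖(m)` minimizes it with quadratic growth: `f m + ‖μ - m‖² ≤ f μ` for every `μ`.
This yields both minimality and uniqueness. The subdifferential condition amounts to
`2 ⟪y - m, m⟫ = λ ‖m‖` and `2 ‖y - m‖ ≤ λ`; the growth estimate then follows by expanding the square
and applying Cauchy-Schwarz to `⟪y - m, μ⟫`. For `m = c • y` with `c` the soft-thresholding factor
both conditions are direct computations, split according to whether `‖y‖ ≤ λ / 2`.
-/

open Finset

noncomputable section

/-- Quadratic growth around a point `m` for which `2 (y - m)` is a subgradient of `lam * ‖·‖₂`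
at `m`; the hypotheses `h1` and `h2` express this subgradient condition. -/
lemma groupLasso_growth {n : ℕ} (y m μ : Fin n → ℝ) (lam : ℝ)
    (h1 : 2 * ∑ i, (y i - m i) * m i = lam * Real.sqrt (∑ i, (m i) ^ 2))
    (h2 : 2 * Real.sqrt (∑ i, (y i - m i) ^ 2) ≤ lam) :
    (∑ i, (y i - m i) ^ 2) + lam * Real.sqrt (∑ i, (m i) ^ 2) + ∑ i, (μ i - m i) ^ 2 ≤
      (∑ i, (y i - μ i) ^ 2) + lam * Real.sqrt (∑ i, (μ i) ^ 2) := by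
  have hcs := Real.sum_mul_le_sqrt_mul_sqrt univ (fun i => y i - m i) μ
  have hexp : ∑ i, (y i - μ i) ^ 2 = ∑ i, (y i - m i) ^ 2 + ∑ i, (μ i - m i) ^ 2
      - 2 * ∑ i, (y i - m i) * μ i + 2 * ∑ i, (y i - m i) * m i := by
    simp only [mul_sum, ← sum_add_distrib, ← sum_sub_distrib]
    exact sum_congr rfl fun i _ => by ring
  have hmul := mul_le_mul_of_nonneg_right h2 (Real.sqrt_nonneg (∑ i, (μ i) ^ 2))
  linarith

/-- Quadratic growth around a multiple `c • y`, where the subgradient condition reduces to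
conditions on `(1 - c) * ‖y‖₂`. -/
lemma groupLasso_growth_smul {n : ℕ} (y μ : Fin n → ℝ) (lam c : ℝ)
    (hc0 : 0 ≤ c) (hc1 : c ≤ 1)
    (h2 : 2 * ((1 - c) * Real.sqrt (∑ i, (y i) ^ 2)) ≤ lam)
    (h1 : c = 0 ∨ 2 * ((1 - c) * Real.sqrt (∑ i, (y i) ^ 2)) = lam) :
    (∑ i, (y i - c * y i) ^ 2) + lam * Real.sqrt (∑ i, (c * y i) ^ 2)
        + ∑ i, (μ i - c * y i) ^ 2 ≤
      (∑ i, (y i - μ i) ^ 2) + lam * Real.sqrt (∑ i, (μ i) ^ 2) := by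
  have hsq := Real.sq_sqrt (sum_nonneg fun i (_ : i ∈ univ) => sq_nonneg (y i))
  have hscale (a : ℝ) (ha : 0 ≤ a) :
      Real.sqrt (∑ i, (a * y i) ^ 2) = a * Real.sqrt (∑ i, (y i) ^ 2) := by
    simp only [mul_pow, ← mul_sum]
    rw [Real.sqrt_mul (sq_nonneg a), Real.sqrt_sq ha]
  have hsub (i : Fin n) : y i - c * y i = (1 - c) * y i := by ring
  apply groupLasso_growth y (fun i => c * y i) μ lam
  · have hin : ∑ i, (y i - c * y i) * (c * y i) = (1 - c) * c * ∑ i, (y i) ^ 2 := by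
      rw [mul_sum]
      exact sum_congr rfl fun i _ => by ring
    rw [hin, hscale c hc0]
    rcases h1 with h | h
    · simp [h]
    · linear_combination c * Real.sqrt (∑ i, (y i) ^ 2) * h - 2 * (1 - c) * c * hsq
  · simp only [hsub]
    rw [hscale _ (sub_nonneg.2 hc1)]
    exact h2

/-- closed form of the group lasso for a single group: for `y ∈ ℝⁿ` and
`λ > 0`, the unique minimizer of `‖y − μ‖₂² + λ‖μ‖₂` is
`μ̂ = (1 − (λ/2)/‖y‖₂)₊ · y` for `y ≠ 0`, and `μ̂ = 0` for `y = 0`. -/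
theorem stmt6 (n : ℕ) (y : Fin n → ℝ) (lam : ℝ) (hlam : 0 < lam) :
    let f : (Fin n → ℝ) → ℝ := fun μ =>
      (∑ i, (y i - μ i) ^ 2) + lam * Real.sqrt (∑ i, (μ i) ^ 2)
    let μhat : Fin n → ℝ :=
      if y = 0 then 0
      else fun i => max (1 - lam / 2 / Real.sqrt (∑ i, (y i) ^ 2)) 0 * y i
    (∀ μ : Fin n → ℝ, f μhat ≤ f μ) ∧
      ∀ μ : Fin n → ℝ, f μ = f μhat → μ = μhat := by
  intro f μhat
  have key (μ : Fin n → ℝ) : f μhat + ∑ i, (μ i - μhat i) ^ 2 ≤ f μ := by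
    by_cases hy : y = 0
    · have hm : μhat = fun i => 0 * y i := by
        simp only [μhat, hy, if_true]
        ext i
        simp
      rw [hm]
      exact groupLasso_growth_smul y μ lam 0 le_rfl zero_le_one
        (by simp [hy, hlam.le]) (Or.inl rfl)
    · have hm : μhat = fun i => max (1 - lam / 2 / Real.sqrt (∑ i, (y i) ^ 2)) 0 * y i := by
        simp only [μhat, if_neg hy]
      have hN : 0 < Real.sqrt (∑ i, (y i) ^ 2) := by
        obtain ⟨i, hi⟩ := Function.ne_iff.1 hy
        exact Real.sqrt_pos.2 (sum_pos' (fun j _ => sq_nonneg (y j))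
          ⟨i, mem_univ i, sq_pos_of_ne_zero hi⟩)
      have hdiv : lam / 2 / Real.sqrt (∑ i, (y i) ^ 2) * Real.sqrt (∑ i, (y i) ^ 2) = lam / 2 :=
        div_mul_cancel₀ _ hN.ne'
      have hpos : 0 < lam / 2 / Real.sqrt (∑ i, (y i) ^ 2) := by positivity
      rw [hm]
      refine groupLasso_growth_smul y μ lam _ (le_max_right _ _)
        (max_le (by linarith) zero_le_one) ?_ ?_
      · have hle := mul_le_mul_of_nonneg_right
          (le_max_left (1 - lam / 2 / Real.sqrt (∑ i, (y i) ^ 2)) 0) hN.le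
        linarith
      · rcases max_choice (1 - lam / 2 / Real.sqrt (∑ i, (y i) ^ 2)) 0 with h | h
        · right
          rw [h]
          linarith
        · exact Or.inl h
  refine ⟨fun μ => ?_, fun μ hμ => ?_⟩
  · have hnn := sum_nonneg fun i (_ : i ∈ univ) => sq_nonneg (μ i - μhat i)
    linarith [key μ]
  · have hle : ∑ i, (μ i - μhat i) ^ 2 ≤ 0 := by linarith [key μ]
    have hzero := (sum_eq_zero_iff_of_nonneg fun i (_ : i ∈ univ) => sq_nonneg (μ i - μhat i)).1
      (le_antisymm hle (sum_nonneg fun i _ => sq_nonneg _))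
    ext i
    exact sub_eq_zero.1 (pow_eq_zero_iff two_ne_zero |>.1 (hzero i (mem_univ i)))
end
end

section
/- Let y ∈ ℝⁿ and λ₁, λ₂ > 0. Define the soft-thresholded vector ỹ ∈ ℝⁿ by ỹ_i = sign(y_i)(|y_i| − λ₂/2)₊ for i = 1,…,n, where (x)₊ = max(x,0). Then the vector μ̂ = (1 − (λ₁/2)/‖ỹ‖₂)₊ · ỹ (with μ̂ = 0 when ỹ = 0) is a minimizer over μ ∈ ℝⁿ of the sparse group lasso criterion ‖y − μ‖₂² + λ₁‖μ‖₂ + λ₂‖μ‖₁. -/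
/-!
Write `y = ỹ + d`, where `ỹ` is the soft-thresholding of `y`. The residual `d` satisfies
`|d i| ≤ λ₂/2` and `d i * ỹ i = (λ₂/2) |ỹ i|`, i.e. `2d` is a subgradient of `λ₂‖·‖₁` at every
`c ỹ` with `c ≥ 0`. Hence `(y i - m)² + λ₂|m| ≥ (ỹ i - m)² + const`, with equality at `m = c ỹ i`
(`soft_ge`, `soft_eq`), so that the `ℓ₁` term can be dropped at the price of replacing `y` by `ỹ`.
By Cauchy–Schwarz, `‖ỹ - μ‖² ≥ (‖ỹ‖ - ‖μ‖)²`, with equality for nonnegative multiples of `ỹ`, and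
the problem reduces to minimizing `(T - M)² + λ₁ M` over `M ≥ 0`, where `T = ‖ỹ‖`
(`scalar_min`).
-/

open Finset

noncomputable section

/-- With `t` the soft-thresholding of `a` at level `l / 2`, twice the residual `a - t` is a
subgradient of `l * |·|` at `t`. -/
lemma soft_residual (a l : ℝ) (hl : 0 < l) :
    |a - Real.sign a * max (|a| - l / 2) 0| ≤ l / 2 ∧
      (a - Real.sign a * max (|a| - l / 2) 0) * (Real.sign a * max (|a| - l / 2) 0) =
        l / 2 * |Real.sign a * max (|a| - l / 2) 0| := by
  rcases lt_trichotomy a 0 with h | h | h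
  · rw [Real.sign_of_neg h, abs_of_neg h]
    rcases le_total (-a - l / 2) 0 with k | k
    · rw [max_eq_right k]
      refine ⟨abs_le.2 ⟨by linarith, by linarith⟩, by simp⟩
    · rw [max_eq_left k, abs_of_nonpos (a := -1 * (-a - l / 2)) (by linarith)]
      exact ⟨abs_le.2 ⟨by linarith, by linarith⟩, by ring⟩
  · subst h
    have : 0 ≤ l / 2 := by positivity
    simpa using this
  · rw [Real.sign_of_pos h, abs_of_pos h]
    rcases le_total (a - l / 2) 0 with k | k
    · rw [max_eq_right k]
      refine ⟨abs_le.2 ⟨by linarith, by linarith⟩, by simp⟩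
    · rw [max_eq_left k, abs_of_nonneg (a := 1 * (a - l / 2)) (by linarith)]
      exact ⟨abs_le.2 ⟨by linarith, by linarith⟩, by ring⟩

lemma soft_ge {a t l : ℝ} (m : ℝ) (h : |a - t| ≤ l / 2) :
    (t - m) ^ 2 + (a ^ 2 - t ^ 2) ≤ (a - m) ^ 2 + l * |m| := by
  have h3 : (a - t) * m ≤ l / 2 * |m| :=
    (le_abs_self _).trans (by rw [abs_mul]; gcongr)
  nlinarith

lemma soft_eq {a t l c : ℝ} (hc : 0 ≤ c) (h : (a - t) * t = l / 2 * |t|) :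
    (a - c * t) ^ 2 + l * |c * t| = (t - c * t) ^ 2 + (a ^ 2 - t ^ 2) := by
  rw [abs_mul, abs_of_nonneg hc]
  linear_combination (-2 * c) * h

lemma scalar_min {T M l s : ℝ} (hM : 0 ≤ M) (hs : s = max (T - l / 2) 0) :
    (T - s) ^ 2 + l * s ≤ (T - M) ^ 2 + l * M := by
  rcases le_total (T - l / 2) 0 with k | k
  · rw [max_eq_right k] at hs
    subst hs
    nlinarith
  · rw [max_eq_left k] at hs
    subst hs
    nlinarith [sq_nonneg (M - (T - l / 2))]

/-- closed form of the sparse group lasso for a single group: for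
`y ∈ ℝⁿ` and `λ₁, λ₂ > 0`, with `ỹ_i = sign(y_i)(|y_i| − λ₂/2)₊` the vector
`μ̂ = (1 − (λ₁/2)/‖ỹ‖₂)₊ · ỹ` (and `μ̂ = 0` if `ỹ = 0`) minimizes
`‖y − μ‖₂² + λ₁‖μ‖₂ + λ₂‖μ‖₁` over `μ ∈ ℝⁿ`. -/
theorem stmt7 (n : ℕ) (y : Fin n → ℝ) (lam₁ lam₂ : ℝ) (h1 : 0 < lam₁) (h2 : 0 < lam₂) :
    let f : (Fin n → ℝ) → ℝ := fun μ =>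
      (∑ i, (y i - μ i) ^ 2) + lam₁ * Real.sqrt (∑ i, (μ i) ^ 2) + lam₂ * ∑ i, |μ i|
    let yt : Fin n → ℝ := fun i => Real.sign (y i) * max (|y i| - lam₂ / 2) 0
    let μhat : Fin n → ℝ :=
      if yt = 0 then 0
      else fun i => max (1 - lam₁ / 2 / Real.sqrt (∑ i, (yt i) ^ 2)) 0 * yt i
    ∀ μ : Fin n → ℝ, f μhat ≤ f μ := by
  intro f yt μhat μ
  set T := Real.sqrt (∑ i, (yt i) ^ 2) with hT
  set c := max (1 - lam₁ / 2 / T) 0 with hc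
  have hc0 : 0 ≤ c := le_max_right _ _
  have hT0 : 0 ≤ T := Real.sqrt_nonneg _
  have hT2 : T ^ 2 = ∑ i, (yt i) ^ 2 := Real.sq_sqrt (sum_nonneg fun i _ => sq_nonneg _)
  have hhat : μhat = fun i => c * yt i := by
    by_cases h : yt = 0
    · simp [μhat, h]
      rfl
    · simp only [μhat, if_neg h]
      rfl
  -- At `T = 0` the junk value `x / 0 = 0` gives `c = 1`, and both sides are still `0`.
  have hcT : c * T = max (T - lam₁ / 2) 0 := by
    rcases hT0.eq_or_lt with h | h
    · rw [← h, mul_zero, max_eq_right (by linarith)]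
    · rw [hc, max_mul_of_nonneg _ _ hT0, zero_mul, sub_mul, one_mul, div_mul_cancel₀ _ h.ne']
  set M := Real.sqrt (∑ i, (μ i) ^ 2) with hM
  have hM2 : M ^ 2 = ∑ i, (μ i) ^ 2 := Real.sq_sqrt (sum_nonneg fun i _ => sq_nonneg _)
  have hres := fun i => soft_residual (y i) lam₂ h2
  have hlow : ∑ i, (yt i - μ i) ^ 2 + ∑ i, (y i ^ 2 - yt i ^ 2) ≤
      ∑ i, (y i - μ i) ^ 2 + lam₂ * ∑ i, |μ i| := by
    rw [mul_sum, ← sum_add_distrib, ← sum_add_distrib]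
    exact sum_le_sum fun i _ => soft_ge (μ i) (hres i).1
  have heq : ∑ i, (y i - c * yt i) ^ 2 + lam₂ * ∑ i, |c * yt i| =
      ∑ i, (yt i - c * yt i) ^ 2 + ∑ i, (y i ^ 2 - yt i ^ 2) := by
    rw [mul_sum, ← sum_add_distrib, ← sum_add_distrib]
    exact sum_congr rfl fun i _ => soft_eq hc0 (hres i).2
  have hdist : (T - M) ^ 2 ≤ ∑ i, (yt i - μ i) ^ 2 := by
    have hcs : ∑ i, yt i * μ i ≤ T * M := Real.sum_mul_le_sqrt_mul_sqrt _ _ _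
    have hexp : ∑ i, (yt i - μ i) ^ 2 = T ^ 2 - 2 * ∑ i, yt i * μ i + M ^ 2 := by
      rw [hT2, hM2, mul_sum, ← sum_sub_distrib, ← sum_add_distrib]
      exact sum_congr rfl fun i _ => by ring
    rw [hexp]
    linarith [sub_sq T M]
  have hdisthat : ∑ i, (yt i - c * yt i) ^ 2 = (T - c * T) ^ 2 := by
    rw [show (T - c * T) ^ 2 = (1 - c) ^ 2 * T ^ 2 by ring, hT2, mul_sum]
    exact sum_congr rfl fun i _ => by ring
  have hnormhat : Real.sqrt (∑ i, (c * yt i) ^ 2) = c * T := by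
    simp_rw [mul_pow]
    rw [← mul_sum, ← hT2, ← mul_pow, Real.sqrt_sq (mul_nonneg hc0 hT0)]
  have hmin := scalar_min (Real.sqrt_nonneg (∑ i, (μ i) ^ 2)) hcT
  rw [hhat]
  simp only [f]
  rw [hnormhat]
  linarith
end
end

section
/- Let n, m ≥ 1, let π₀ be a probability mass function on {0,1,…,m}, and for each j = 1,…,m let π_j be a probability mass function on {1,…,n}. For a 0–1 matrix D ∈ {0,1}^{n×m}, let h_j(D) = ∑_{i=1}^n D_{ij} and m₀(D) = #{j : h_j(D) > 0}. Then ∑ over all nonzero D ∈ {0,1}^{n×m} of π₀(m₀(D)) · C(m, m₀(D))⁻¹ · ∏_{j : h_j(D) > 0} π_j(h_j(D)) · C(n, h_j(D))⁻¹ = 1 − π₀(0), where C(a,b) is the binomial coefficient. -/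
/-! The weight of the zero matrix is `π₀(0)`, so it suffices that the weights of all matrices sum
to `1`. Encode a 0–1 matrix by its column supports `A : Fin m → Finset (Fin n)` and group the
matrices by the set `S` of nonzero columns. For fixed `S` the inner sum factorizes over the columns
in `S` (`sum_fiber_eq_one`), and each factor is the total mass of `π_j` spread evenly over
the nonempty supports of each size, hence `1` (`sum_nonempty_supports`). What remains is
`π₀(|S|) / C(m, |S|)` summed over `S`, which is the total mass of `π₀` by the same count of
subsets by size (`sum_card_div_choose`). -/

open Finset

noncomputable section

/-- Column sparsity level `h_j(D) = ∑_i D_{ij}` of a 0–1 matrix `D`. -/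
def hjD {n m : ℕ} (D : Fin n → Fin m → Bool) (j : Fin m) : ℕ :=
  (Finset.univ.filter fun i => D i j = true).card

/-- Number of nonzero columns `m₀(D)` of a 0–1 matrix `D`. -/
def m0D {n m : ℕ} (D : Fin n → Fin m → Bool) : ℕ :=
  (Finset.univ.filter fun j => 0 < hjD D j).card

/-- Spreading the mass `f k` evenly over the subsets of size `k` preserves the total mass. -/
theorem sum_card_div_choose (N : ℕ) (f : ℕ → ℝ) :
    ∑ S : Finset (Fin N), f S.card * ((N.choose S.card : ℝ))⁻¹ =
      ∑ k ∈ Finset.range (N + 1), f k := by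
  have h := Finset.sum_powerset_apply_card (f := fun k => f k * ((N.choose k : ℝ))⁻¹)
    (x := (Finset.univ : Finset (Fin N)))
  rw [Finset.powerset_univ, Finset.card_univ, Fintype.card_fin] at h
  rw [h]
  refine Finset.sum_congr rfl fun k hk => ?_
  have hc : (N.choose k : ℝ) ≠ 0 := by
    exact_mod_cast (Nat.choose_pos (Nat.lt_succ_iff.mp (Finset.mem_range.mp hk))).ne'
  rw [nsmul_eq_mul]
  field_simp

theorem sum_nonempty_supports (n : ℕ) (p : ℕ → ℝ) (hp : ∑ h ∈ Finset.Icc 1 n, p h = 1) :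
    ∑ c ∈ Finset.univ.filter (fun c : Finset (Fin n) => 0 < c.card),
      p c.card * ((n.choose c.card : ℝ))⁻¹ = 1 := by
  -- Cut `p` off at `0`, so that the sum runs over all subsets.
  have h := sum_card_div_choose n (fun k => if 0 < k then p k else 0)
  simp only [ite_mul, zero_mul] at h
  rw [Finset.sum_filter, h, ← Finset.sum_filter, ← hp]
  refine Finset.sum_congr ?_ fun _ _ => rfl
  ext k
  simp only [Finset.mem_filter, Finset.mem_range, Finset.mem_Icc]
  omega

/-- Conditionally on the set `S` of nonzero columns, the column weights have total mass `1`. -/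
theorem sum_fiber_eq_one (n m : ℕ) (p : Fin m → ℕ → ℝ)
    (hp : ∀ j, ∑ h ∈ Finset.Icc 1 n, p j h = 1) (S : Finset (Fin m)) :
    ∑ A ∈ Finset.univ.filter (fun A : Fin m → Finset (Fin n) =>
        (Finset.univ.filter fun j => 0 < (A j).card) = S),
      ∏ j ∈ S, p j (A j).card * ((n.choose (A j).card : ℝ))⁻¹ = 1 := by
  -- The fibre over `S` is a product of sets of columns: nonempty ones in `S`, empty ones outside.
  have hfib : Finset.univ.filter (fun A : Fin m → Finset (Fin n) =>
      (Finset.univ.filter fun j => 0 < (A j).card) = S) =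
      Fintype.piFinset fun j => if j ∈ S then
        Finset.univ.filter (fun c : Finset (Fin n) => 0 < c.card) else {∅} := by
    ext A
    simp only [Finset.mem_filter, Finset.mem_univ, true_and, Fintype.mem_piFinset,
      Finset.ext_iff (s₂ := S)]
    refine forall_congr' fun j => ?_
    by_cases hj : j ∈ S <;> simp [hj]
  have hprod : ∀ A : Fin m → Finset (Fin n),
      ∏ j ∈ S, p j (A j).card * ((n.choose (A j).card : ℝ))⁻¹ =
      ∏ j, if j ∈ S then p j (A j).card * ((n.choose (A j).card : ℝ))⁻¹ else 1 := by
    intro A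
    simp [Finset.prod_ite_mem]
  simp only [hprod]
  rw [hfib, ← Finset.prod_univ_sum (f := fun j (c : Finset (Fin n)) =>
    if j ∈ S then p j c.card * ((n.choose c.card : ℝ))⁻¹ else 1)]
  refine Finset.prod_eq_one fun j _ => ?_
  by_cases hj : j ∈ S
  · simpa only [hj, if_true] using sum_nonempty_supports n (p j) (hp j)
  · simp [hj]

/-- A 0–1 matrix corresponds to the family of supports of its columns. -/
def columnSupports (n m : ℕ) : (Fin n → Fin m → Bool) ≃ (Fin m → Finset (Fin n)) where
  toFun D j := Finset.univ.filter fun i => D i j = true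
  invFun A i j := decide (i ∈ A j)
  left_inv D := by ext; simp
  right_inv A := by ext; simp

/-- The prior weights of all 0–1 matrices, the zero matrix included, sum to `1`. -/
theorem sum_all_weights (n m : ℕ) (π0 : ℕ → ℝ) (p : Fin m → ℕ → ℝ)
    (hπ0 : ∑ k ∈ Finset.range (m + 1), π0 k = 1)
    (hp : ∀ j, ∑ h ∈ Finset.Icc 1 n, p j h = 1) :
    ∑ D : Fin n → Fin m → Bool,
      (π0 (m0D D) * ((m.choose (m0D D) : ℝ))⁻¹ *
        ∏ j ∈ Finset.univ.filter fun j => 0 < hjD D j,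
          p j (hjD D j) * ((n.choose (hjD D j) : ℝ))⁻¹) = 1 := by
  let supp : (Fin m → Finset (Fin n)) → Finset (Fin m) :=
    fun A => Finset.univ.filter fun j => 0 < (A j).card
  let G : (Fin m → Finset (Fin n)) → ℝ := fun A =>
    π0 (supp A).card * ((m.choose (supp A).card : ℝ))⁻¹ *
      ∏ j ∈ supp A, p j (A j).card * ((n.choose (A j).card : ℝ))⁻¹
  calc _ = ∑ A, G A := Fintype.sum_equiv (columnSupports n m) _ G fun D => rfl
    _ = ∑ S : Finset (Fin m), ∑ A ∈ Finset.univ.filter (fun A => supp A = S), G A :=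
        (Finset.sum_fiberwise _ _ _).symm
    _ = ∑ S : Finset (Fin m), π0 S.card * ((m.choose S.card : ℝ))⁻¹ := by
        refine Finset.sum_congr rfl fun S _ => ?_
        rw [← mul_one (π0 S.card * _), ← sum_fiber_eq_one n m p hp S, Finset.mul_sum]
        refine Finset.sum_congr rfl fun A hA => ?_
        have hS : supp A = S := (Finset.mem_filter.mp hA).2
        simp only [G, hS]
    _ = 1 := by rw [sum_card_div_choose, hπ0]

/-- the hierarchical prior weights assigned to nonzero 0–1 matrices sum
to `1 − π₀(0)`. -/
theorem stmt13 (n m : ℕ) (hn : 1 ≤ n) (hm : 1 ≤ m)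
    (π0 : ℕ → ℝ) (πj : Fin m → ℕ → ℝ)
    (hπ0pos : ∀ k, k ≤ m → 0 ≤ π0 k)
    (hπ0 : ∑ k ∈ Finset.range (m + 1), π0 k = 1)
    (hπjpos : ∀ j h, 1 ≤ h → h ≤ n → 0 ≤ πj j h)
    (hπj : ∀ j, ∑ h ∈ Finset.Icc 1 n, πj j h = 1) :
    ∑ D ∈ Finset.univ.filter fun D : Fin n → Fin m → Bool => D ≠ fun _ _ => false,
      (π0 (m0D D) * ((m.choose (m0D D) : ℝ))⁻¹ *
        ∏ j ∈ Finset.univ.filter fun j => 0 < hjD D j,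
          πj j (hjD D j) * ((n.choose (hjD D j) : ℝ))⁻¹)
      = 1 - π0 0 := by
  have hall := sum_all_weights n m π0 πj hπ0 hπj
  rw [← Finset.sum_filter_add_sum_filter_not _
    (fun D : Fin n → Fin m → Bool => D ≠ fun _ _ => false)] at hall
  have hzero : Finset.univ.filter
      (fun D : Fin n → Fin m → Bool => ¬ D ≠ fun _ _ => false) = {fun _ _ => false} := by
    ext D
    simp
  have hh : ∀ j, hjD (fun (_ : Fin n) (_ : Fin m) => false) j = 0 := by
    intro j
    simp [hjD]
  have hm0 : m0D (fun (_ : Fin n) (_ : Fin m) => false) = 0 := by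
    simp [m0D, hh]
  rw [hzero, Finset.sum_singleton, hm0] at hall
  simp only [hh, lt_irrefl, Finset.filter_false, Finset.prod_empty, Nat.choose_zero_right,
    Nat.cast_one, inv_one, mul_one] at hall
  exact eq_sub_of_add_eq hall
end
end
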